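/- arXiv:1612.01442 — 5 statements merged into one kernel-verified Lean document; each statement's English description precedes it below -/
import Mathlib

section
/- Let G* be the HNN extension of G with associated subgroups A, B via φ: A → B. For any g, h ∈ G* there exists an integer r ≥ 0 such that sqn(gh) = sqn(g)[r]sqn(h); that is, sqn(g) factors as σ₁ρ and sqn(h) factors as ρ⁻¹τ₁ with |ρ| = r, and sqn(gh) = σ₁τ₁. -/
/-!
The signature of an element can be read off from any of its reduced expressions
(`sqn_eq_of_reduced`, a consequence of Britton's lemma), and every element has one
(`exists_reduced`). So it suffices to multiply two reduced expressions
`g₀ t^{ε₁} ⋯ t^{εₙ} gₙ` and `h₀ t^{δ₁} ⋯ t^{δₘ} hₘ` and to follow the exponents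
(`exists_reduced_mul`, by induction on the length of the left factor). If
`t^{εₙ} (gₙ h₀) t^{δ₁}` is not a pinch, the concatenated word is already reduced and nothing
is cancelled. Otherwise `δ₁ = -εₙ` and the pinch equals an element `c ∈ G`
(`exists_of_eq_pinch`); absorbing `c` into `h₁` leaves a product of two reduced words with
`εₙ` and `δ₁` deleted, and the pair `εₙ, -εₙ` is recorded in `ρ, ρ⁻¹`.
-/

open HNNExtension

open scoped Classical

namespace PalHNN

variable {G : Type*} [Group G] (A B : Subgroup G) (φ : A ≃* B)

/-- The HNN extension `⟨G, t | t⁻¹ a t = φ a, a ∈ A⟩`.  In Mathlib's `HNNExtension G X Y ψ`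
the defining relation is `t x t⁻¹ = ψ x` for `x ∈ X`, so the paper's group is
`HNNExtension G B A φ.symm`. -/
abbrev HNN := HNNExtension G B A φ.symm

/-- The element `g₀ t^{ε₁} g₁ ⋯ t^{εₙ} gₙ` of the HNN extension determined by a head `g₀`
and a list of pairs `(εᵢ, gᵢ)`. -/
def wordProd (g0 : G) (l : List (ℤˣ × G)) : HNN A B φ :=
  of g0 * (l.map fun p => t ^ (p.1 : ℤ) * of p.2).prod

/-- The product `gₙ t^{εₙ} g_{n-1} t^{ε_{n-1}} ⋯ g₁ t^{ε₁} g₀` of the reverse of the word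
`g₀ t^{ε₁} g₁ ⋯ t^{εₙ} gₙ`. -/
def revProd (g0 : G) (l : List (ℤˣ × G)) : HNN A B φ :=
  (l.reverse.map fun p => of p.2 * t ^ (p.1 : ℤ)).prod * of g0

/-- A word `g₀ t^{ε₁} g₁ ⋯ t^{εₙ} gₙ` is reduced iff it contains no subword `t⁻¹ gᵢ t` with
`gᵢ ∈ A` and no subword `t gᵢ t⁻¹` with `gᵢ ∈ B`. -/
def HNNReduced (l : List (ℤˣ × G)) : Prop :=
  List.Chain' (fun p q => ¬(p.1 = -1 ∧ p.2 ∈ A ∧ q.1 = 1) ∧ ¬(p.1 = 1 ∧ p.2 ∈ B ∧ q.1 = -1)) l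

/-- An element of the HNN extension is a group-palindrome if it has a reduced expression
`g₀ t^{ε₁} g₁ ⋯ t^{εₙ} gₙ` whose reverse `gₙ t^{εₙ} g_{n-1} ⋯ g₁ t^{ε₁} g₀` represents the
same element. -/
def GroupPalindrome (x : HNN A B φ) : Prop :=
  ∃ (g0 : G) (l : List (ℤˣ × G)),
    HNNReduced A B l ∧ wordProd A B φ g0 l = x ∧ revProd A B φ g0 l = x

/-- The signature `(ε₁, …, εₙ)` of an element, read off from a chosen reduced expression. -/
noncomputable def sqn (x : HNN A B φ) : List ℤˣ :=
  if h : ∃ p : G × List (ℤˣ × G), HNNReduced A B p.2 ∧ wordProd A B φ p.1 p.2 = x then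
    (Classical.choose h).2.map Prod.fst
  else []

/-- The number of maximal blocks of consecutive `v`'s of length exactly `k` in the list `s`. -/
noncomputable def blockCount (v : ℤˣ) (k : ℕ) (s : List ℤˣ) : ℕ :=
  ((Finset.range (s.length + 1)).filter fun i => ∃ pre post : List ℤˣ,
    s = pre ++ List.replicate k v ++ post ∧ pre.length = i ∧
      pre.getLast? ≠ some v ∧ post.head? ≠ some v).card

/-- `p_k`: the number of maximal blocks of `+1`'s of length `k` in the signature. -/
noncomputable def pk (k : ℕ) (x : HNN A B φ) : ℕ := blockCount 1 k (sqn A B φ x)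

/-- `m_k`: the number of maximal blocks of `-1`'s of length `k` in the signature. -/
noncomputable def mk (k : ℕ) (x : HNN A B φ) : ℕ := blockCount (-1) k (sqn A B φ x)

/-- `d_k = p_k - m_k`. -/
noncomputable def dk (k : ℕ) (x : HNN A B φ) : ℤ := (pk A B φ k x : ℤ) - (mk A B φ k x : ℤ)

/-- `r_k ∈ {0,1}`: the remainder of `d_k` modulo 2. -/
noncomputable def rk (k : ℕ) (x : HNN A B φ) : ℤ := dk A B φ k x % 2

/-- The quasi-homomorphism `Δ(g) = Σ_{k ≥ 1} r_k(g)` (the sum is finite since `r_k = 0` for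
`k` larger than the length of the signature). -/
noncomputable def Delta (x : HNN A B φ) : ℝ :=
  ∑ k ∈ Finset.Icc 1 (sqn A B φ x).length, (rk A B φ k x : ℝ)


/-- The reducedness condition in terms of `toSubgroup`, the form used by Mathlib's
`ReducedWord`. The order `B A` reflects that `HNN A B φ` is `HNNExtension G B A φ.symm`. -/
theorem hnnReduced_iff {G : Type*} [Group G] (A B : Subgroup G) (l : List (ℤˣ × G)) :
    HNNReduced A B l ↔
      l.IsChain (fun a b => a.2 ∈ toSubgroup B A a.1 → a.1 = b.1) := by
  have key : (fun p q : ℤˣ × G => ¬(p.1 = -1 ∧ p.2 ∈ A ∧ q.1 = 1) ∧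
      ¬(p.1 = 1 ∧ p.2 ∈ B ∧ q.1 = -1)) =
      (fun a b => a.2 ∈ toSubgroup B A a.1 → a.1 = b.1) := by
    funext ⟨u, a⟩ ⟨v, b⟩
    have hne : (-1 : ℤˣ) ≠ 1 := by decide
    rcases Int.units_eq_one_or u with rfl | rfl <;>
      rcases Int.units_eq_one_or v with rfl | rfl <;> simp [hne, hne.symm]
  unfold HNNReduced
  rw [key]
  rfl

theorem exists_reduced {G : Type*} [Group G] (A B : Subgroup G) (φ : A ≃* B)
    (x : HNN A B φ) :
    ∃ (g0 : G) (l : List (ℤˣ × G)), HNNReduced A B l ∧ wordProd A B φ g0 l = x := by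
  obtain ⟨d⟩ := NormalWord.TransversalPair.nonempty G B A
  let w := NormalWord.equiv φ.symm d x
  exact ⟨w.head, w.toList, (hnnReduced_iff A B _).2 w.chain,
    (NormalWord.equiv φ.symm d).symm_apply_apply x⟩

/-- The signature does not depend on the reduced expression from which it is read off. -/
theorem sqn_eq_of_reduced {G : Type*} [Group G] (A B : Subgroup G) (φ : A ≃* B)
    (g0 : G) (l : List (ℤˣ × G)) (hl : HNNReduced A B l) :
    sqn A B φ (wordProd A B φ g0 l) = l.map Prod.fst := by
  have h : ∃ p : G × List (ℤˣ × G),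
      HNNReduced A B p.2 ∧ wordProd A B φ p.1 p.2 = wordProd A B φ g0 l := ⟨(g0, l), hl, rfl⟩
  rw [sqn, dif_pos h]
  obtain ⟨h1, h2⟩ := Classical.choose_spec h
  exact (ReducedWord.map_fst_eq_and_of_prod_eq φ.symm
    (w₁ := ⟨_, _, (hnnReduced_iff A B _).1 h1⟩)
    (w₂ := ⟨g0, l, (hnnReduced_iff A B _).1 hl⟩) h2).1

/-- A pinch `t^u g t^{-u}` lies in the base group. -/
theorem exists_of_eq_pinch {G : Type*} [Group G] (A B : Subgroup G) (φ : A ≃* B)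
    (u : ℤˣ) (g : G) (hg : g ∈ toSubgroup B A u) :
    ∃ c : G, (t ^ (u : ℤ) * of g * t ^ ((-u : ℤˣ) : ℤ) : HNN A B φ) = of c := by
  rcases Int.units_eq_one_or u with rfl | rfl
  · exact ⟨φ.symm ⟨g, hg⟩, by simpa using (equiv_eq_conj (φ := φ.symm) ⟨g, hg⟩).symm⟩
  · exact ⟨φ ⟨g, hg⟩, by simpa using (equiv_symm_eq_conj (φ := φ.symm) ⟨g, hg⟩).symm⟩

/-- The product of two reduced words has a reduced expression whose exponents arise from those
of the factors by deleting a final block `ρ` of the first and the initial block `ρ⁻¹` of the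
second. -/
theorem exists_reduced_mul {G : Type*} [Group G] (A B : Subgroup G) (φ : A ≃* B)
    (g0 : G) (l₁ : List (ℤˣ × G)) :
    ∀ (h0 : G) (l₂ : List (ℤˣ × G)), HNNReduced A B l₁ → HNNReduced A B l₂ →
    ∃ (k0 : G) (l : List (ℤˣ × G)) (σ₁ ρ τ₁ : List ℤˣ), HNNReduced A B l ∧
      wordProd A B φ k0 l = wordProd A B φ g0 l₁ * wordProd A B φ h0 l₂ ∧
      l₁.map Prod.fst = σ₁ ++ ρ ∧
      l₂.map Prod.fst = ρ.reverse.map (fun e => -e) ++ τ₁ ∧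
      l.map Prod.fst = σ₁ ++ τ₁ := by
  induction l₁ using List.reverseRecOn with
  | nil =>
    intro h0 l₂ _ h₂
    exact ⟨g0 * h0, l₂, [], [], l₂.map Prod.fst, h₂, by simp [wordProd, mul_assoc],
      by simp, by simp, by simp⟩
  | append_singleton l₁ p ih =>
    obtain ⟨u, g⟩ := p
    intro h0 l₂ h₁ h₂
    by_cases hc : g * h0 ∈ toSubgroup B A u ∧ ∃ h1 l₂', l₂ = (-u, h1) :: l₂'
    · obtain ⟨hmem, h1, l₂, rfl⟩ := hc
      obtain ⟨c, hc⟩ := exists_of_eq_pinch A B φ u (g * h0) hmem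
      rw [hnnReduced_iff] at h₁ h₂
      obtain ⟨k0, l, σ₁, ρ, τ₁, hl, hprod, hσ, hτ, hστ⟩ := ih (c * h1) l₂
        ((hnnReduced_iff A B _).2 (List.isChain_append.1 h₁).1)
        ((hnnReduced_iff A B _).2 (List.isChain_cons.1 h₂).2)
      refine ⟨k0, l, σ₁, ρ ++ [u], τ₁, hl, ?_, by simp [hσ], by simp [hτ], hστ⟩
      rw [hprod]
      simp only [wordProd, map_mul, ← hc, List.map_append, List.map_cons, List.map_nil,
        List.prod_append, List.prod_cons, List.prod_nil, mul_one, mul_assoc]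
    · refine ⟨g0, l₁ ++ (u, g * h0) :: l₂, l₁.map Prod.fst ++ [u], [], l₂.map Prod.fst,
        ?_, by simp [wordProd, mul_assoc], by simp, by simp, by simp⟩
      rw [hnnReduced_iff] at h₁ h₂ ⊢
      -- the condition between the last letter of `l₁` and `t^u` involves only the exponent `u`
      obtain ⟨ha, -, hb⟩ := List.isChain_append.1 h₁
      refine List.isChain_append.2 ⟨ha, List.isChain_cons.2 ⟨?_, h₂⟩, ?_⟩
      · rintro ⟨v, h1⟩ hv hmem
        by_contra hne
        obtain ⟨l₂', rfl⟩ := List.head?_eq_some_iff.1 hv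
        refine hc ⟨hmem, h1, l₂', ?_⟩
        have huv : u = -v := Int.units_ne_iff_eq_neg.1 hne
        rw [huv, neg_neg]
      · intro x hx y hy
        simp only [List.head?_cons, Option.mem_def, Option.some.injEq] at hy
        subst hy
        exact hb x hx (u, g) (by simp)

/-- For any `g, h` in the HNN extension there is an `r ≥ 0` such that
`sqn (g h) = sqn (g) [r] sqn (h)`: the signature of `g` ends with a block `ρ` of length `r`,
the signature of `h` begins with `ρ⁻¹`, and the signature of `g * h` is obtained by deleting
these blocks and concatenating what remains. -/
theorem hnn_sqn_mul_eq_rProd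
    {G : Type*} [Group G] (A B : Subgroup G) (φ : A ≃* B)
    (g h : HNN A B φ) :
    ∃ (r : ℕ) (σ₁ ρ τ₁ : List ℤˣ), ρ.length = r ∧
      sqn A B φ g = σ₁ ++ ρ ∧
      sqn A B φ h = ρ.reverse.map (fun e => -e) ++ τ₁ ∧
      sqn A B φ (g * h) = σ₁ ++ τ₁ := by
  obtain ⟨g0, l₁, h₁, rfl⟩ := exists_reduced A B φ g
  obtain ⟨h0, l₂, h₂, rfl⟩ := exists_reduced A B φ h
  obtain ⟨k0, l, σ₁, ρ, τ₁, hl, hprod, hσ, hτ, hστ⟩ :=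
    exists_reduced_mul A B φ g0 l₁ h0 l₂ h₁ h₂
  refine ⟨ρ.length, σ₁, ρ, τ₁, rfl, ?_, ?_, ?_⟩
  · rw [sqn_eq_of_reduced A B φ _ _ h₁, hσ]
  · rw [sqn_eq_of_reduced A B φ _ _ h₂, hτ]
  · rw [← hprod, sqn_eq_of_reduced A B φ _ _ hl, hστ]

end PalHNN
end

section
/- Let G* be the HNN extension of G with associated subgroups A, B via φ: A → B, and let g ∈ G* be a group-palindrome with reduced expression of signature length n. If n = 2k, then g has the form g₀t^{ε₁}g₁⋯g_{k−1}t^{ε_k} g_k' t^{ε_k} g_{k−1}⋯g₁t^{ε₁}g₀ where g_k' = x·g_k for some x ∈ A ∪ B. If n = 2k+1, then g has the form g₀t^{ε₁}g₁⋯t^{ε_k}g_k t^{ε_{k+1}} g_k' t^{ε_k}⋯g₁t^{ε₁}g₀ where g_k' = x·g_k for some x ∈ A ∪ B. -/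
/-!
The reverse of the given reduced word has the same number `n` of stable letters. Any word of
length `n` representing an element of reduced length `n` is itself reduced, because a pinch would
shorten it (`exists_reduced_or_shorter`), so the word and its reverse are two reduced expressions of
the same element. By Britton's lemma, in the form of Mathlib's
`ReducedWord.map_fst_eq_and_of_prod_eq`, initial segments of two such expressions ending just after
the same number of stable letters differ by right multiplication by an element of `A ∪ B`
(`exists_prefix_eq`). Replacing the first half of the reverse by the first half of the word,
at the cost of such an `x`, gives the claimed form.
-/

open HNNExtension

open scoped Classical

namespace PalHNN

variable {G : Type*} [Group G] (A B : Subgroup G) (φ : A ≃* B)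

section Helpers

variable {G : Type*} [Group G] {A B : Subgroup G} {φ : A ≃* B}

/-- Mathlib's condition on consecutive syllables `t ^ p.1 * p.2`, `t ^ q.1 * q.2` of a reduced word,
for the group `HNN A B φ`, in which the roles of `A` and `B` are exchanged. -/
def Step (A B : Subgroup G) (p q : ℤˣ × G) : Prop := p.2 ∈ toSubgroup B A p.1 → p.1 = q.1

lemma HNNReduced.isChain {l : List (ℤˣ × G)} (h : HNNReduced A B l) : l.IsChain (Step A B) := by
  refine List.IsChain.imp ?_ h
  rintro ⟨u, a⟩ ⟨v, b⟩ ⟨h1, h2⟩ hm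
  rcases Int.units_eq_one_or u with rfl | rfl <;> rcases Int.units_eq_one_or v with rfl | rfl <;>
    simp_all

lemma exists_conj (u : ℤˣ) {c : G} (hc : c ∈ toSubgroup B A u) :
    ∃ d ∈ toSubgroup B A (-u), (t : HNN A B φ) ^ (u : ℤ) * of c = of d * t ^ (u : ℤ) := by
  rcases Int.units_eq_one_or u with rfl | rfl
  · exact ⟨φ.symm ⟨c, hc⟩, SetLike.coe_mem _, by simpa using t_mul_of (φ := φ.symm) ⟨c, hc⟩⟩
  · exact ⟨φ ⟨c, hc⟩, by simp, by simpa using inv_t_mul_of (φ := φ.symm) ⟨c, hc⟩⟩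

@[simp] lemma wordProd_nil (g : G) : wordProd A B φ g [] = of g := by simp [wordProd]

lemma wordProd_cons (g : G) (u : ℤˣ) (a : G) (l : List (ℤˣ × G)) :
    wordProd A B φ g ((u, a) :: l) = of g * t ^ (u : ℤ) * wordProd A B φ a l := by
  simp [wordProd, mul_assoc]

lemma wordProd_mul (g h : G) (l : List (ℤˣ × G)) :
    wordProd A B φ (g * h) l = of g * wordProd A B φ h l := by
  simp [wordProd, mul_assoc]

@[simp] lemma revProd_nil (g : G) : revProd A B φ g [] = of g := by simp [revProd]

lemma revProd_cons (g : G) (u : ℤˣ) (a : G) (l : List (ℤˣ × G)) :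
    revProd A B φ g ((u, a) :: l) = revProd A B φ a l * t ^ (u : ℤ) * of g := by
  simp [revProd, mul_assoc]

lemma revProd_append_cons (g : G) (p : List (ℤˣ × G)) (u : ℤˣ) (a : G) (s : List (ℤˣ × G)) :
    revProd A B φ g (p ++ (u, a) :: s) =
      revProd A B φ a s * t ^ (u : ℤ) * revProd A B φ g p := by
  simp [revProd, mul_assoc]

/-- A word is either reduced or can be rewritten as a strictly shorter reduced word. -/
lemma exists_reduced_or_shorter (l : List (ℤˣ × G)) : ∀ g : G,
    ∃ (h : G) (l' : List (ℤˣ × G)), l'.IsChain (Step A B) ∧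
      wordProd A B φ h l' = wordProd A B φ g l ∧ ((h = g ∧ l' = l) ∨ l'.length < l.length) := by
  induction l with
  | nil => exact fun g => ⟨g, [], List.isChain_nil, rfl, Or.inl ⟨rfl, rfl⟩⟩
  | cons x l ih =>
    obtain ⟨u, a⟩ := x
    intro g
    obtain ⟨h, l', hc, hp, hl⟩ := ih a
    by_cases hred : ((u, h) :: l').IsChain (Step A B)
    · refine ⟨g, (u, h) :: l', hred, by rw [wordProd_cons, wordProd_cons, hp], ?_⟩
      rcases hl with ⟨rfl, rfl⟩ | hl
      · exact Or.inl ⟨rfl, rfl⟩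
      · exact Or.inr (by simpa using hl)
    · cases l' with
      | nil => simp at hred
      | cons y l'' =>
        obtain ⟨v, b⟩ := y
        have hpinch : h ∈ toSubgroup B A u ∧ u ≠ v := by
          simpa [List.isChain_cons_cons, hc, Step] using hred
        obtain ⟨hm, huv⟩ := hpinch
        obtain rfl : v = -u := by
          rcases Int.units_eq_one_or u with rfl | rfl <;>
            rcases Int.units_eq_one_or v with rfl | rfl <;> simp_all
        obtain ⟨d, -, hd⟩ := exists_conj (φ := φ) u hm
        refine ⟨g * (d * b), l'', hc.tail, ?_, Or.inr ?_⟩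
        · rw [wordProd_cons, ← hp, wordProd_cons, wordProd_mul, wordProd_mul,
            mul_assoc (of g), ← mul_assoc (t ^ (u : ℤ)), ← mul_assoc (t ^ (u : ℤ)), hd]
          simp [mul_assoc]
        · rcases hl with ⟨-, rfl⟩ | hl
          · simp
          · simp at hl ⊢; omega

lemma reduced_unique {g h : G} {l l' : List (ℤˣ × G)} (hl : l.IsChain (Step A B))
    (hl' : l'.IsChain (Step A B)) (hp : wordProd A B φ g l = wordProd A B φ h l') :
    l.map Prod.fst = l'.map Prod.fst ∧
      ∀ u ∈ l.head?.map Prod.fst, g⁻¹ * h ∈ toSubgroup B A (-u) :=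
  ReducedWord.map_fst_eq_and_of_prod_eq φ.symm
    (w₂ := ⟨h, l', hl'⟩) (w₁ := ⟨g, l, hl⟩) hp

/-- A word representing the same element as a reduced word with equally many stable letters is
itself reduced. -/
lemma isChain_of_length_eq {g h : G} {l l' : List (ℤˣ × G)} (hl : l.IsChain (Step A B))
    (hlen : l.length = l'.length) (hp : wordProd A B φ g l = wordProd A B φ h l') :
    l'.IsChain (Step A B) := by
  obtain ⟨k, m, hm, hpm, ⟨-, rfl⟩ | hlt⟩ := exists_reduced_or_shorter (φ := φ) l' h
  · exact hm
  · have := congrArg List.length (reduced_unique hl hm (hp.trans hpm.symm)).1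
    simp only [List.length_map] at this
    omega

/-- Initial segments of two reduced expressions of the same element, both ending in their `k`-th
stable letter, differ by right multiplication by an element of `A ∪ B`. -/
lemma exists_prefix_eq (p : List (ℤˣ × G)) : ∀ (g h : G) (p' : List (ℤˣ × G)) (u v : ℤˣ) (a b : G)
    (s s' : List (ℤˣ × G)), p.length = p'.length →
    (p ++ (u, a) :: s).IsChain (Step A B) → (p' ++ (v, b) :: s').IsChain (Step A B) →
    wordProd A B φ g (p ++ (u, a) :: s) = wordProd A B φ h (p' ++ (v, b) :: s') →
    ∃ x : G, (x ∈ A ∨ x ∈ B) ∧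
      wordProd A B φ h p' * t ^ (v : ℤ) = wordProd A B φ g p * t ^ (u : ℤ) * of x := by
  -- A common leading letter `t ^ u` moves the discrepancy of the heads from its left to its right.
  have key : ∀ (g h : G) (u : ℤˣ), g⁻¹ * h ∈ toSubgroup B A (-u) → ∃ d : G,
      d ∈ toSubgroup B A u ∧
        (of h * t ^ (u : ℤ) : HNN A B φ) = of g * t ^ (u : ℤ) * of d := by
    intro g h u hm
    obtain ⟨d, hd, he⟩ := exists_conj (φ := φ) (-u) hm
    refine ⟨d, by simpa using hd, ?_⟩
    have he' : (of d : HNN A B φ) = t ^ (-(u : ℤ)) * of (g⁻¹ * h) * t ^ (u : ℤ) := by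
      rw [Units.val_neg] at he
      rw [he]; simp
    rw [he']; simp [mul_assoc]
  induction p with
  | nil =>
    intro g h p' u v a b s s' hlen hc hc' hp
    obtain rfl : p' = [] := List.length_eq_zero_iff.1 hlen.symm
    obtain ⟨h1, h2⟩ := reduced_unique hc hc' hp
    obtain rfl : u = v := by simpa using congrArg List.head? h1
    obtain ⟨d, hd, he⟩ := key g h u (h2 u (by simp))
    refine ⟨d, ?_, by simpa using he⟩
    rcases Int.units_eq_one_or u with rfl | rfl
    · exact Or.inr hd
    · exact Or.inl hd
  | cons y p ih =>
    intro g h p' u v a b s s' hlen hc hc' hp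
    obtain ⟨w, c⟩ := y
    cases p' with
    | nil => simp at hlen
    | cons y' p' =>
      obtain ⟨w', c'⟩ := y'
      obtain ⟨h1, h2⟩ := reduced_unique hc hc' hp
      obtain rfl : w = w' := by simpa using congrArg List.head? h1
      obtain ⟨d, -, he⟩ := key g h w (h2 w (by simp))
      obtain ⟨x, hx, hxe⟩ := ih c (d * c') p' u v a b s s' (by simpa using hlen) hc.tail hc'.tail (by
        rw [List.cons_append, List.cons_append, wordProd_cons, wordProd_cons, he, mul_assoc,
          mul_assoc, mul_assoc, ← wordProd_mul] at hp
        exact mul_left_cancel (mul_left_cancel hp))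
      refine ⟨x, hx, ?_⟩
      rw [wordProd_cons, wordProd_cons, he, mul_assoc _ (of d), ← wordProd_mul, mul_assoc, hxe]
      simp only [mul_assoc]

/-- The final group element of the word `g t^{ε₁} g₁ ⋯ t^{εₙ} gₙ`, which is the head of its
reverse. -/
def revHead : G → List (ℤˣ × G) → G
  | g, [] => g
  | _, (_, a) :: l => revHead a l

/-- The list of syllables `(εₙ, gₙ₋₁), …, (ε₁, g)` of the reverse of `g t^{ε₁} g₁ ⋯ t^{εₙ} gₙ`. -/
def revTail : G → List (ℤˣ × G) → List (ℤˣ × G)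
  | _, [] => []
  | g, (u, a) :: l => revTail a l ++ [(u, g)]

lemma length_revTail (l : List (ℤˣ × G)) : ∀ g : G, (revTail g l).length = l.length := by
  induction l with
  | nil => intro g; rfl
  | cons y l ih => intro g; simp [revTail, ih]

lemma wordProd_append (g : G) (l m : List (ℤˣ × G)) :
    wordProd A B φ g (l ++ m) = wordProd A B φ g l * wordProd A B φ 1 m := by
  simp [wordProd, mul_assoc]

lemma wordProd_rev (l : List (ℤˣ × G)) : ∀ g : G,
    wordProd A B φ (revHead g l) (revTail g l) = revProd A B φ g l := by
  induction l with
  | nil => intro g; simp [revHead, revTail]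
  | cons y l ih =>
    intro g
    obtain ⟨u, a⟩ := y
    simp [revHead, revTail, wordProd_append, wordProd_cons, revProd_cons, ih, mul_assoc]

lemma revHead_append_cons (p : List (ℤˣ × G)) (u : ℤˣ) (a : G) (s : List (ℤˣ × G)) : ∀ g : G,
    revHead g (p ++ (u, a) :: s) = revHead a s := by
  induction p with
  | nil => intro g; rfl
  | cons y p ih => intro g; exact ih _

lemma revTail_append_cons (p : List (ℤˣ × G)) (u : ℤˣ) (a : G) (s : List (ℤˣ × G)) : ∀ g : G,
    revTail g (p ++ (u, a) :: s) = revTail a s ++ (u, revHead g p) :: revTail g p := by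
  induction p with
  | nil => intro g; rfl
  | cons y p ih => intro g; simp [revTail, revHead, ih]

/-- For a reduced word with the same product as its reverse, an initial segment of the reverse may
be replaced by the initial segment of the word with equally many stable letters. -/
lemma exists_rev_prefix_eq {g : G} {l : List (ℤˣ × G)} (hred : HNNReduced A B l)
    (hpal : revProd A B φ g l = wordProd A B φ g l) {p q s r : List (ℤˣ × G)} {u v : ℤˣ} {a b : G}
    (hl : l = p ++ (u, a) :: s) (hl' : l = q ++ (v, b) :: r) (hlen : p.length = r.length) :
    ∃ x : G, (x ∈ A ∨ x ∈ B) ∧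
      revProd A B φ b r * t ^ (v : ℤ) = wordProd A B φ g p * t ^ (u : ℤ) * of x := by
  have hw : wordProd A B φ g l = wordProd A B φ (revHead g l) (revTail g l) := by
    rw [wordProd_rev, hpal]
  have hc := isChain_of_length_eq hred.isChain (length_revTail l g).symm hw
  have hr : revTail g l = revTail b r ++ (v, revHead g q) :: revTail g q := by
    rw [hl', revTail_append_cons]
  have hh : revHead g l = revHead b r := by rw [hl', revHead_append_cons]
  rw [hr] at hc
  rw [hr, hh, hl] at hw
  rw [← wordProd_rev]
  exact exists_prefix_eq p g _ _ u v a _ s _ (by rw [hlen, length_revTail])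
    (hl ▸ hred.isChain) hc hw

end Helpers

/-- **Normal form of group-palindromes in an HNN extension.** If
`g = g₀ t^{ε₁} g₁ ⋯ t^{εₙ} gₙ` is a reduced word that is a group-palindrome
(its reverse represents the same element), then:
* if `n = 2k` (with `k ≥ 1`), `g = g₀ t^{ε₁} g₁ ⋯ g_{k-1} t^{ε_k} (x g_k) t^{ε_k} g_{k-1} ⋯ g₁ t^{ε₁} g₀`
  for some `x ∈ A ∪ B`;
* if `n = 2k + 1`, `g = g₀ t^{ε₁} g₁ ⋯ t^{ε_k} g_k t^{ε_{k+1}} (x g_k) t^{ε_k} g_{k-1} ⋯ g₁ t^{ε₁} g₀`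
  for some `x ∈ A ∪ B`. -/
theorem hnn_group_palindrome_normal_form
    {G : Type*} [Group G] (A B : Subgroup G) (φ : A ≃* B)
    (g0 : G) (l : List (ℤˣ × G)) (hred : HNNReduced A B l)
    (hpal : revProd A B φ g0 l = wordProd A B φ g0 l) :
    (∀ k : ℕ, l.length = 2 * (k + 1) →
      ∃ x : G, (x ∈ A ∨ x ∈ B) ∧
        wordProd A B φ g0 l =
          wordProd A B φ g0 (l.take k) *
            (t : HNN A B φ) ^ (((l.map Prod.fst).getD k 1 : ℤˣ) : ℤ) *
            of (x * (l.map Prod.snd).getD k 1) *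
            (t : HNN A B φ) ^ (((l.map Prod.fst).getD k 1 : ℤˣ) : ℤ) *
            revProd A B φ g0 (l.take k)) ∧
    (∀ k : ℕ, l.length = 2 * k + 1 →
      ∃ x : G, (x ∈ A ∨ x ∈ B) ∧
        wordProd A B φ g0 l =
          wordProd A B φ g0 (l.take k) *
            (t : HNN A B φ) ^ (((l.map Prod.fst).getD k 1 : ℤˣ) : ℤ) *
            of x * revProd A B φ g0 (l.take k)) := by
  constructor
  · intro k hk
    -- `l = p, (u, a), (v, b), r` with `p` and `r` of length `k`.
    obtain ⟨p, u, a, v, b, r, rfl, hp⟩ : ∃ p u a v b r,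
        l = p ++ (u, a) :: (v, b) :: r ∧ p.length = k := by
      refine ⟨l.take k, l[k].1, l[k].2, l[k + 1].1, l[k + 1].2, l.drop (k + 2), ?_, ?_⟩
      · rw [Prod.mk.eta, Prod.mk.eta, List.getElem_cons_drop, List.getElem_cons_drop,
          List.take_append_drop]
      · simp; omega
    obtain ⟨x, hx, he⟩ := exists_rev_prefix_eq hred hpal (p := p) (q := p ++ [(u, a)]) (r := r)
      (v := v) (b := b)
      rfl (by simp) (by simp at hk; omega)
    refine ⟨x, hx, ?_⟩
    rw [← hpal, revProd_append_cons, revProd_cons, he]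
    subst hp
    simp [mul_assoc]
  · intro k hk
    -- `l = p, (u, a), r` with `p` and `r` of length `k`.
    obtain ⟨p, u, a, r, rfl, hp⟩ : ∃ p u a r, l = p ++ (u, a) :: r ∧ p.length = k := by
      refine ⟨l.take k, l[k].1, l[k].2, l.drop (k + 1), ?_, ?_⟩
      · rw [Prod.mk.eta, List.getElem_cons_drop, List.take_append_drop]
      · simp; omega
    obtain ⟨x, hx, he⟩ := exists_rev_prefix_eq hred hpal (p := p) (q := p) (r := r)
      rfl rfl (by simp at hk; omega)
    refine ⟨x, hx, ?_⟩
    rw [← hpal, revProd_append_cons, he]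
    subst hp
    simp [mul_assoc]

end PalHNN
end

section
/- Let G* be the HNN extension of G with associated subgroups A, B via φ: A → B, and let Δ: G* → ℝ be defined from signatures as Δ(g) = Σ_{k≥1} r_k(g). If p ∈ G* is a group-palindrome, then Δ(p) ≤ 1. -/
/-!
The signature of a group-palindrome is a palindromic list, and a palindromic list has at most one
maximal block that is mapped to itself by reversal, namely the block around its centre.

* Every word of the HNN extension either is reduced already or equals a reduced word with strictly
  fewer occurrences of `t` (`exists_reducedWord`). The reverse of a reduced word need not be reduced
  in general, since `t g t⁻¹` with `g ∉ B` turns into `t⁻¹ g t`, where `g ∈ A` is possible. If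
  however the reverse represents the same element, it has as many letters `t` as a reduced
  expression of this element, so it is reduced too. By uniqueness of signatures (Britton's lemma)
  the signature then equals its own reverse (`sqn_reverse`).
* In a palindrome of length `n`, reversal is an involution `i ↦ n - (i + k)` on the starting
  positions of the maximal blocks of `v`'s of length `k`. Without a fixed point their number is even
  (`even_blockCount`). A fixed block is centred in the list, and two centred maximal nonempty blocks
  have the same length (`centred_block_unique`). Hence `r_k = 0` for all `k ≥ 1` except at most one,
  and `Δ ≤ 1`.
-/

open HNNExtension

open scoped Classical

namespace PalHNN

variable {G : Type*} [Group G] (A B : Subgroup G) (φ : A ≃* B)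

open HNNExtension.NormalWord in
/-- Any word can be rewritten as a reduced word; this shortens the word unless it was reduced
from the start. -/
theorem exists_reducedWord {G : Type*} [Group G] {A B : Subgroup G} (φ : A ≃* B)
    (l : List (ℤˣ × G)) : ∀ g : G, ∃ w : ReducedWord G A B,
      w.prod φ = of g * (l.map fun p => t ^ (p.1 : ℤ) * of p.2).prod ∧
      ((w.head = g ∧ w.toList = l) ∨ w.toList.length < l.length) := by
  induction l with
  | nil => exact fun g => ⟨⟨g, [], List.isChain_nil⟩, by simp [ReducedWord.prod], by simp⟩
  | cons p l ih =>
    obtain ⟨u, a⟩ := p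
    intro g
    obtain ⟨⟨a', l', hc⟩, hw, hl⟩ := ih a
    simp only [ReducedWord.prod] at hw hl
    have key : of g * (((u, a) :: l).map fun p => t ^ (p.1 : ℤ) * of p.2).prod =
        (of g * t ^ (u : ℤ) * (of a' * (l'.map fun p => t ^ (p.1 : ℤ) * of p.2).prod) :
          HNNExtension G A B φ) := by
      rw [hw]; simp [mul_assoc]
    by_cases hgood : ∀ y ∈ l'.head?, a' ∈ toSubgroup A B u → u = y.1
    · refine ⟨⟨g, (u, a') :: l', List.isChain_cons.2 ⟨hgood, hc⟩⟩, ?_, ?_⟩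
      · rw [key]; simp [ReducedWord.prod, mul_assoc]
      · rcases hl with ⟨rfl, rfl⟩ | hl
        · simp
        · right; simpa using hl
    · push Not at hgood
      obtain ⟨⟨v, b⟩, hy, ha, hv⟩ := hgood
      obtain ⟨l'', rfl⟩ : ∃ l'', l' = (v, b) :: l'' := by
        cases l' with
        | nil => simp at hy
        | cons c l'' => exact ⟨l'', by simp at hy; rw [hy]⟩
      -- the pinch `t ^ u * a' * t ^ (-u)` is an element `c` of the base group
      obtain ⟨c, hcc⟩ : ∃ c : G, (t ^ (u : ℤ) * of a' * t ^ (v : ℤ) : HNNExtension G A B φ)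
          = of c := by
        rcases Int.units_eq_one_or u with rfl | rfl <;>
        rcases Int.units_eq_one_or v with rfl | rfl
        · exact absurd rfl hv
        · exact ⟨φ ⟨a', ha⟩, by rw [equiv_eq_conj]; simp⟩
        · exact ⟨φ.symm ⟨a', ha⟩, by rw [equiv_symm_eq_conj]; simp⟩
        · exact absurd rfl hv
      refine ⟨⟨g * c * b, l'', (List.isChain_cons.1 hc).2⟩, ?_, ?_⟩
      · rw [key]
        simp only [ReducedWord.prod, map_mul, ← hcc]
        simp [mul_assoc]
      · right
        rcases hl with ⟨-, rfl⟩ | hl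
        · simp
        · simp at hl ⊢; omega

/-- Reducedness in the sense of `HNNReduced` gives reducedness in the sense of Mathlib, whose
HNN extension has the roles of `A` and `B` exchanged. -/
theorem HNNReduced.isChain_s6 {G : Type*} [Group G] {A B : Subgroup G} {l : List (ℤˣ × G)}
    (h : HNNReduced A B l) :
    l.IsChain (fun a b => a.2 ∈ toSubgroup B A a.1 → a.1 = b.1) := by
  refine List.IsChain.imp ?_ h
  rintro ⟨u, a⟩ ⟨v, b⟩ ⟨h1, h2⟩ ha
  rcases Int.units_eq_one_or u with rfl | rfl <;> rcases Int.units_eq_one_or v with rfl | rfl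
  · rfl
  · exact absurd ⟨rfl, ha, rfl⟩ h2
  · exact absurd ⟨rfl, ha, rfl⟩ h1
  · rfl

/-- The reverse of a word, rewritten in the form `g₀ t^{ε₁} g₁ ⋯ t^{εₙ} gₙ`. -/
theorem exists_wordProd_eq_revProd {G : Type*} [Group G] (A B : Subgroup G) (φ : A ≃* B)
    (l : List (ℤˣ × G)) : ∀ g0 : G, ∃ (g' : G) (l' : List (ℤˣ × G)),
      l'.map Prod.fst = (l.map Prod.fst).reverse ∧
      wordProd A B φ g' l' = revProd A B φ g0 l := by
  induction l with
  | nil => exact fun g0 => ⟨g0, [], by simp, by simp [wordProd, revProd]⟩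
  | cons p l ih =>
    intro g0
    obtain ⟨g', l', h1, h2⟩ := ih p.2
    refine ⟨g', l' ++ [(p.1, g0)], by simp [h1], ?_⟩
    have : revProd A B φ g0 (p :: l) = revProd A B φ p.2 l * (t ^ (p.1 : ℤ) * of g0) := by
      simp [revProd, mul_assoc]
    rw [this, ← h2]
    simp [wordProd, mul_assoc]

/-- The signature does not depend on the chosen reduced expression. -/
theorem sqn_eq {G : Type*} [Group G] {A B : Subgroup G} {φ : A ≃* B} {x : HNN A B φ} {g0 : G}
    {l : List (ℤˣ × G)} (hl : HNNReduced A B l) (hx : wordProd A B φ g0 l = x) :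
    sqn A B φ x = l.map Prod.fst := by
  have h : ∃ p : G × List (ℤˣ × G), HNNReduced A B p.2 ∧ wordProd A B φ p.1 p.2 = x :=
    ⟨(g0, l), hl, hx⟩
  rw [sqn, dif_pos h]
  obtain ⟨h1, h2⟩ := Classical.choose_spec h
  exact (ReducedWord.map_fst_eq_and_of_prod_eq φ.symm
    (w₁ := ⟨(Classical.choose h).1, (Classical.choose h).2, h1.isChain_s6⟩)
    (w₂ := ⟨g0, l, hl.isChain_s6⟩) (h2.trans hx.symm)).1

theorem sqn_reverse {G : Type*} [Group G] {A B : Subgroup G} {φ : A ≃* B} {x : HNN A B φ}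
    (hx : GroupPalindrome A B φ x) : (sqn A B φ x).reverse = sqn A B φ x := by
  obtain ⟨g0, l, hl, h1, h2⟩ := hx
  rw [sqn_eq hl h1]
  obtain ⟨g', l', hl', h3⟩ := exists_wordProd_eq_revProd A B φ l g0
  obtain ⟨w, hw, hlen⟩ := exists_reducedWord φ.symm l' g'
  have hfst : w.toList.map Prod.fst = l.map Prod.fst :=
    (ReducedWord.map_fst_eq_and_of_prod_eq φ.symm (w₁ := w) (w₂ := ⟨g0, l, hl.isChain_s6⟩)
      (hw.trans (h3.trans (h2.trans h1.symm)))).1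
  have e1 := congrArg List.length hfst
  have e2 := congrArg List.length hl'
  simp only [List.length_map, List.length_reverse] at e1 e2
  rcases hlen with ⟨-, hwl⟩ | hlen
  · rw [← hl', ← hwl, hfst]
  · omega

/-- `s` has a maximal block of `v`'s of length `k` that starts at position `i`. -/
def IsBlock (v : ℤˣ) (k : ℕ) (s : List ℤˣ) (i : ℕ) : Prop :=
  ∃ pre post : List ℤˣ, s = pre ++ List.replicate k v ++ post ∧ pre.length = i ∧
    pre.getLast? ≠ some v ∧ post.head? ≠ some v

theorem IsBlock.le {v : ℤˣ} {k : ℕ} {s : List ℤˣ} {i : ℕ} (h : IsBlock v k s i) :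
    i + k ≤ s.length := by
  obtain ⟨pre, post, rfl, rfl, -, -⟩ := h
  simp

theorem IsBlock.reverse {v : ℤˣ} {k : ℕ} {s : List ℤˣ} {i : ℕ} (h : IsBlock v k s i) :
    IsBlock v k s.reverse (s.length - (i + k)) := by
  obtain ⟨pre, post, rfl, rfl, h1, h2⟩ := h
  refine ⟨post.reverse, pre.reverse, by simp, by simp; omega, by simpa using h2, by simpa using h1⟩

theorem even_blockCount {v : ℤˣ} {k : ℕ} {s : List ℤˣ} (hs : s.reverse = s)
    (hfix : ∀ i, IsBlock v k s i → 2 * i + k ≠ s.length) : Even (blockCount v k s) := by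
  have hsum : ∑ i ∈ (Finset.range (s.length + 1)).filter (IsBlock v k s), (1 : ZMod 2) = 0 := by
    refine Finset.sum_involution (fun i _ => s.length - (i + k)) (fun _ _ => by decide) ?_ ?_ ?_
    · intro i hi _ heq
      have hb := (Finset.mem_filter.1 hi).2
      have := hb.le
      exact hfix i hb (by omega)
    · intro i hi
      have hb := (Finset.mem_filter.1 hi).2.reverse
      rw [hs] at hb
      exact Finset.mem_filter.2 ⟨Finset.mem_range.2 (by omega), hb⟩
    · intro i hi
      have := (Finset.mem_filter.1 hi).2.le
      omega
  rw [Finset.sum_const, nsmul_one] at hsum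
  exact (ZMod.natCast_eq_zero_iff_even).1 hsum

/-- If one centred block were strictly longer than another, the letter preceding the shorter one
would lie inside the longer one, contradicting maximality. -/
theorem centred_block_unique_aux {v v' : ℤˣ} {k k' : ℕ} {s : List ℤˣ} {i i' : ℕ} (hk' : 1 ≤ k')
    (h : IsBlock v k s i) (h' : IsBlock v' k' s i')
    (hc : 2 * i + k = s.length) (hc' : 2 * i' + k' = s.length) : i' ≤ i := by
  by_contra! hlt
  obtain ⟨pre, post, hs, rfl, -, -⟩ := h
  obtain ⟨pre', post', hs', rfl, h1, -⟩ := h'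
  have hv : ∀ j, pre.length ≤ j → j < pre.length + k → s[j]? = some v := by
    intro j hj hj'
    rw [hs, List.append_assoc, List.getElem?_append_right hj,
      List.getElem?_append_left (by simp; omega), List.getElem?_replicate_of_lt (by omega)]
  have hv' : s[pre'.length]? = some v' := by
    rw [hs', List.append_assoc, List.getElem?_append_right le_rfl,
      List.getElem?_append_left (by simp; omega), List.getElem?_replicate_of_lt (by omega)]
  have hlast : pre'.getLast? = s[pre'.length - 1]? := by
    rw [hs', List.append_assoc, List.getElem?_append_left (by omega), List.getLast?_eq_getElem?]
  rw [hv _ (by omega) (by omega)] at hv'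
  exact h1 (by rw [hlast, hv _ (by omega) (by omega), hv'])

theorem centred_block_unique {v v' : ℤˣ} {k k' : ℕ} {s : List ℤˣ} {i i' : ℕ} (hk : 1 ≤ k)
    (hk' : 1 ≤ k') (h : IsBlock v k s i) (h' : IsBlock v' k' s i')
    (hc : 2 * i + k = s.length) (hc' : 2 * i' + k' = s.length) : k = k' := by
  have := centred_block_unique_aux hk' h h' hc hc'
  have := centred_block_unique_aux hk h' h hc' hc
  omega

/-- If `r_k ≠ 0`, then some block of length `k` is fixed by reversal. -/
theorem exists_centred_block {G : Type*} [Group G] {A B : Subgroup G} {φ : A ≃* B} {x : HNN A B φ}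
    (hx : GroupPalindrome A B φ x) {k : ℕ} (hr : rk A B φ k x ≠ 0) :
    ∃ v i, IsBlock v k (sqn A B φ x) i ∧ 2 * i + k = (sqn A B φ x).length := by
  by_contra! hno
  have h1 := even_blockCount (sqn_reverse hx) (hno 1)
  have h2 := even_blockCount (sqn_reverse hx) (hno (-1))
  apply hr
  rw [rk, dk, pk, mk]
  obtain ⟨a, ha⟩ := h1
  obtain ⟨b, hb⟩ := h2
  omega

/-- If `p` is a group-palindrome in the HNN extension, then `Δ(p) ≤ 1`. -/
theorem hnn_delta_of_group_palindrome
    {G : Type*} [Group G] (A B : Subgroup G) (φ : A ≃* B)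
    (p : HNN A B φ) (hp : GroupPalindrome A B φ p) :
    Delta A B φ p ≤ 1 := by
  rw [Delta]
  by_cases h : ∃ k ∈ Finset.Icc 1 (sqn A B φ p).length, rk A B φ k p ≠ 0
  · obtain ⟨k, hk, hr⟩ := h
    obtain ⟨v, i, hb, hc⟩ := exists_centred_block hp hr
    rw [Finset.sum_eq_single_of_mem k hk]
    · have : rk A B φ k p ≤ 1 := by rw [rk]; omega
      exact_mod_cast this
    · intro k' hk' hne
      by_contra hr'
      obtain ⟨v', i', hb', hc'⟩ := exists_centred_block hp (k := k') (by exact_mod_cast hr')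
      exact hne (centred_block_unique (Finset.mem_Icc.1 hk').1 (Finset.mem_Icc.1 hk).1 hb' hb hc' hc)
  · push Not at h
    rw [Finset.sum_eq_zero fun k hk => by rw [h k hk, Int.cast_zero]]
    exact zero_le_one

end PalHNN
end

section
/- Let G be a group, A and B proper subgroups of G with an isomorphism φ: A → B, and G* the HNN extension of G with associated subgroups A, B. Then the quasi-homomorphism Δ: G* → ℝ defined from signatures is unbounded: for every n ≥ 1 there exists an element g ∈ G* with Δ(g) ≥ n. -/
/-!
Every finite sequence `s` of signs is a signature: fix `a ∉ A` and `b ∉ B`, and follow each letter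
`t` by `b` and each letter `t⁻¹` by `a`; the resulting word admits no reduction at all
(`hnnReduced_fullWord`). By the normal form theorem for HNN extensions, any two reduced expressions
of an element have the same signature, so the element represented by that word has signature `s`
whichever reduced expression is chosen (`sqn_wordProd`).

It remains to exhibit a sequence of signs with many odd `d_k`. The sequence `blocks n`, made of the
consecutive blocks `(-1), (+1)², (-1)³, …` of lengths `1, …, n` and alternating signs, has exactly
one maximal block of each length `k ∈ {1, …, n}` (`blockCount_blocks`). Hence `d_k = ±1` and
`r_k = 1` for those `k`, and `Δ ≥ n`. The block count is computed by adding one block at a time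
(`blockCount_append_replicate`).
-/

open HNNExtension

open scoped Classical

namespace PalHNN

variable {G : Type*} [Group G] (A B : Subgroup G) (φ : A ≃* B)

/-- The normal form theorem: the signature does not depend on the chosen reduced expression. -/
theorem sqn_wordProd (g0 : G) (l : List (ℤˣ × G)) (hl : HNNReduced A B l) :
    sqn A B φ (wordProd A B φ g0 l) = l.map Prod.fst := by
  -- `HNNReduced` is Mathlib's reducedness condition for the swapped pair `(B, A)`.
  have key : ∀ l : List (ℤˣ × G), HNNReduced A B l →
      l.IsChain (fun a b => a.2 ∈ toSubgroup B A a.1 → a.1 = b.1) := by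
    intro l hl
    refine List.IsChain.imp ?_ hl
    rintro ⟨u, g⟩ ⟨v, h⟩ ⟨h1, h2⟩ hg
    rcases Int.units_eq_one_or u with rfl | rfl <;>
      rcases Int.units_eq_one_or v with rfl | rfl <;> simp_all
  have h : ∃ p : G × List (ℤˣ × G), HNNReduced A B p.2 ∧
      wordProd A B φ p.1 p.2 = wordProd A B φ g0 l := ⟨(g0, l), hl, rfl⟩
  rw [sqn, dif_pos h]
  obtain ⟨h1, h2⟩ := Classical.choose_spec h
  exact (ReducedWord.map_fst_eq_and_of_prod_eq φ.symm
    (w₁ := ⟨(Classical.choose h).1, (Classical.choose h).2, key _ h1⟩)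
    (w₂ := ⟨g0, l, key _ hl⟩) h2).1

/-- The word with signature `s` in which each `t` is followed by `b` and each `t⁻¹` by `a`. -/
noncomputable def fullWord (a b : G) (s : List ℤˣ) : List (ℤˣ × G) :=
  s.map fun u => (u, if u = 1 then b else a)

theorem hnnReduced_fullWord {a b : G} (ha : a ∉ A) (hb : b ∉ B) (s : List ℤˣ) :
    HNNReduced A B (fullWord a b s) := by
  unfold HNNReduced fullWord
  refine (List.isChain_map _).2 ?_
  refine List.IsChain.imp (R := fun _ _ => True) ?_ ?_
  · intro u v _
    rcases Int.units_eq_one_or u with rfl | rfl <;> simp [ha, hb]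
  · simp [List.isChain_iff_getElem]

/-- The maximal blocks of length `k ≥ 1` described through the entries of the list: the entries
at positions `i, …, i + k - 1` are `v`, while the neighbouring ones, if any, are not. -/
theorem isBlock_iff (v : ℤˣ) (k : ℕ) (hk : 1 ≤ k) (s : List ℤˣ) (i : ℕ) :
    (i ∈ (Finset.range (s.length + 1)).filter fun i => ∃ pre post : List ℤˣ,
      s = pre ++ List.replicate k v ++ post ∧ pre.length = i ∧
        pre.getLast? ≠ some v ∧ post.head? ≠ some v) ↔
    (∀ j, i ≤ j → j < i + k → s[j]? = some v) ∧ (∀ j, j + 1 = i → s[j]? ≠ some v) ∧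
      s[i + k]? ≠ some v := by
  rw [Finset.mem_filter, Finset.mem_range]
  constructor
  · rintro ⟨-, pre, post, rfl, rfl, h1, h2⟩
    refine ⟨?_, ?_, ?_⟩
    · intro j hj hj'
      grind
    · intro j hj
      rw [List.getLast?_eq_getElem?] at h1
      grind
    · rw [List.head?_eq_getElem?] at h2
      grind
  · rintro ⟨h1, h2, h3⟩
    have hlen : i + k ≤ s.length := by
      have := h1 (i + k - 1) (by omega) (by omega)
      grind
    refine ⟨by omega, s.take i, s.drop (i + k), ?_, by simp; omega, ?_, ?_⟩
    · apply List.ext_getElem?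
      intro j
      have := h1 j
      grind
    · rw [List.getLast?_eq_getElem?]
      have := h2 (i - 1)
      grind
    · rw [List.head?_eq_getElem?]
      grind

/-- Appending a block of a sign different from the last entry of `s` creates one new maximal block
and leaves the others unchanged. -/
theorem blockCount_append_replicate (v u : ℤˣ) (k m : ℕ) (hk : 1 ≤ k) (hm : 1 ≤ m)
    (s : List ℤˣ) (hs : s.getLast? ≠ some u) :
    blockCount v k (s ++ List.replicate m u) =
      blockCount v k s + if v = u ∧ k = m then 1 else 0 := by
  rw [List.getLast?_eq_getElem?] at hs
  have get : ∀ j, (s ++ List.replicate m u)[j]? =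
      if j < s.length then s[j]? else if j < s.length + m then some u else none := by
    intro j
    grind
  have none_of : ∀ j, s.length ≤ j → s[j]? = none := fun j hj => by simpa using hj
  have mem : ∀ i,
      ((∀ j, i ≤ j → j < i + k → (s ++ List.replicate m u)[j]? = some v) ∧
        (∀ j, j + 1 = i → (s ++ List.replicate m u)[j]? ≠ some v) ∧
        (s ++ List.replicate m u)[i + k]? ≠ some v) ↔
      ((∀ j, i ≤ j → j < i + k → s[j]? = some v) ∧ (∀ j, j + 1 = i → s[j]? ≠ some v) ∧
        s[i + k]? ≠ some v) ∨ (i = s.length ∧ v = u ∧ k = m) := by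
    intro i
    simp only [get]
    constructor
    · rintro ⟨h1, h2, h3⟩
      rcases lt_or_ge i s.length with hi | hi
      · left
        have hle : i + k ≤ s.length := by
          -- otherwise the block would run across the boundary between `s` and the new block
          by_contra hlt
          have e1 := h1 (s.length - 1) (by omega) (by omega)
          have e2 := h1 s.length (by omega) (by omega)
          grind
        refine ⟨fun j hj hj' => ?_, fun j hj => ?_, ?_⟩
        · have := h1 j hj hj'
          grind
        · have := h2 j hj
          grind
        · grind
      · right
        have e1 := h1 i (by omega) (by omega)
        have e2 := h2 (i - 1)
        have e3 := h1 (i + k - 1) (by omega) (by omega)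
        grind
    · rintro (⟨h1, h2, h3⟩ | ⟨rfl, rfl, rfl⟩)
      · have e1 := h1 (i + k - 1) (by omega) (by omega)
        have hle : i + k ≤ s.length := by
          by_contra hlt
          rw [none_of _ (by omega)] at e1
          simp at e1
        refine ⟨fun j hj hj' => ?_, fun j hj => ?_, ?_⟩
        · rw [if_pos (by omega)]
          exact h1 j hj hj'
        · rw [if_pos (by omega)]
          exact h2 j hj
        · grind
      · refine ⟨fun j hj hj' => ?_, fun j hj => ?_, ?_⟩
        · grind
        · have : j = s.length - 1 := by omega
          grind
        · grind
  unfold blockCount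
  split_ifs with h
  · rw [← Finset.card_insert_of_notMem (a := s.length)]
    · congr 1
      ext i
      rw [isBlock_iff v k hk, mem, Finset.mem_insert, isBlock_iff v k hk]
      tauto
    · rw [isBlock_iff v k hk]
      rintro ⟨h1, -⟩
      have := h1 s.length le_rfl (by omega)
      simp at this
  · rw [add_zero]
    congr 1
    ext i
    rw [isBlock_iff v k hk, mem, isBlock_iff v k hk]
    tauto

/-- The sequence of signs formed by consecutive blocks of lengths `1, …, n`, the block of length `k`
consisting of the sign `(-1) ^ k`. -/
def blocks : ℕ → List ℤˣ
  | 0 => []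
  | n + 1 => blocks n ++ List.replicate (n + 1) ((-1) ^ (n + 1))

theorem le_length_blocks (n : ℕ) : n ≤ (blocks n).length := by
  cases n <;> simp [blocks]

theorem getLast?_blocks (n : ℕ) : (blocks n).getLast? ≠ some ((-1) ^ (n + 1)) := by
  cases n with
  | zero => simp [blocks]
  | succ n =>
    rcases neg_one_pow_eq_or ℤˣ n with h | h <;>
      simp [blocks, List.getLast?_append, List.getLast?_replicate, pow_succ, h]

theorem blockCount_blocks (v : ℤˣ) (k : ℕ) (hk : 1 ≤ k) (n : ℕ) :
    blockCount v k (blocks n) = if v = (-1) ^ k ∧ k ≤ n then 1 else 0 := by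
  induction n with
  | zero =>
    rw [if_neg (by omega), blockCount, Finset.card_eq_zero, Finset.eq_empty_iff_forall_notMem]
    intro i hi
    have := ((isBlock_iff v k hk _ i).1 hi).1 i le_rfl (by omega)
    simp [blocks] at this
  | succ n ih =>
    rw [blocks, blockCount_append_replicate v _ k _ hk (by omega) _ (getLast?_blocks n), ih]
    rcases lt_trichotomy k (n + 1) with h | rfl | h
    · simp [h.ne, h.le, Nat.lt_succ_iff.1 h]
    · simp
    · simp [h.ne', not_le.2 h, show ¬ k ≤ n by omega]

/-- If `A` and `B` are proper subgroups of `G`, then the quasi-homomorphism `Δ` on the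
HNN extension `⟨G, t | t⁻¹ a t = φ a, a ∈ A⟩` is unbounded: for every `n ≥ 1` there is an
element `g` with `Δ(g) ≥ n`. -/
theorem hnn_delta_unbounded
    {G : Type*} [Group G] (A B : Subgroup G) (hA : A ≠ ⊤) (hB : B ≠ ⊤) (φ : A ≃* B)
    (n : ℕ) (hn : 1 ≤ n) :
    ∃ g : HNN A B φ, (n : ℝ) ≤ Delta A B φ g := by
  obtain ⟨a, -, ha⟩ := SetLike.exists_of_lt (lt_top_iff_ne_top.2 hA)
  obtain ⟨b, -, hb⟩ := SetLike.exists_of_lt (lt_top_iff_ne_top.2 hB)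
  have hsqn : sqn A B φ (wordProd A B φ 1 (fullWord a b (blocks n))) = blocks n := by
    rw [sqn_wordProd A B φ _ _ (hnnReduced_fullWord A B ha hb _)]
    simp [fullWord, Function.comp_def]
  refine ⟨wordProd A B φ 1 (fullWord a b (blocks n)), ?_⟩
  unfold Delta
  rw [hsqn]
  have hr : ∀ k ∈ Finset.Icc 1 n,
      (rk A B φ k (wordProd A B φ 1 (fullWord a b (blocks n))) : ℝ) = 1 := by
    intro k hk
    rw [Finset.mem_Icc] at hk
    rw [rk, dk, pk, mk, hsqn, blockCount_blocks _ k hk.1, blockCount_blocks _ k hk.1]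
    rcases neg_one_pow_eq_or ℤˣ k with h | h <;> simp [h, hk.2]
  calc (n : ℝ) = ∑ k ∈ Finset.Icc 1 n,
        (rk A B φ k (wordProd A B φ 1 (fullWord a b (blocks n))) : ℝ) := by
        rw [Finset.sum_congr rfl hr]
        simp
    _ ≤ _ := by
        refine Finset.sum_le_sum_of_subset_of_nonneg
          (Finset.Icc_subset_Icc_right (le_length_blocks n)) fun k _ _ => ?_
        exact_mod_cast Int.emod_nonneg _ (by norm_num)

end PalHNN
end

section
/- Let G = A *_C B be an amalgamated free product and fix a nontrivial a ∈ A with CaC ≠ Ca⁻¹C. Let Δ: G → ℝ be defined from a-segments in special forms as Δ(g) = Σ_{k≥1} r_k(g). Then for any g, h ∈ G, Δ(gh) ≤ Δ(g) + Δ(h) + 9; i.e., Δ is a quasi-homomorphism. -/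
/-!
Every `g` in the amalgam has an alternating word whose letters are unique up to their double cosets
modulo `C` (`normal_form`, transferred from `Monoid.PushoutI`, and `map_dc_eq`). The segments
counted by `p_k` and `m_k` are therefore the gaps between consecutive letters in `C a C`, respectively
in `C a⁻¹ C`, of any such word (`IsSpecialForm.exists_alternating`), and do not depend on the chosen
special form.

Words for `g`, `h` and `gh` form a tripod (`tripod`): up to double cosets they are `P X Q`,
`Q⁻¹ Y S` and `P Z S`, where `X`, `Y`, `Z` have at most one letter. Inversion exchanges the gaps of
`C a C` with those of `C a⁻¹ C`, so that `p_k + m_k`, which has the parity of `d_k`, takes the same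
value on `Q` and `Q⁻¹` (`gaps_reverse`). When two legs are joined at a centre of at most one letter,
at most one new gap straddles the centre for each of the two double cosets, and one more arises if
the centre is itself a letter of one of them; it cannot be a letter of both, as `C a C ≠ C a⁻¹ C`.
Hence at most three gaps arise (`gaps_pair`). Modulo `2` the contributions of the three legs cancel
in `d_k(g) + d_k(h) + d_k(gh)`, and what remains is accounted for by at most `3 + 3 + 3 = 9` gaps.
-/

open Monoid

open scoped Classical

namespace PalAmalg

variable {A B C : Type*} [Group A] [Group B] [Group C]
variable (i : C →* A) (j : C →* B)

/-- The free product of `A` and `B` amalgamated over `C` (embedded in `A` via `i` and in `B`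
via `j`): the quotient of the free product `A ∗ B` by the normal subgroup generated by the
elements `i c * (j c)⁻¹`, `c ∈ C`. -/
abbrev Amalg : Type _ :=
  Coprod A B ⧸ Subgroup.normalClosure
    {x : Coprod A B | ∃ c : C, x = Coprod.inl (i c) * (Coprod.inr (j c))⁻¹}

/-- The canonical map of the factor `A` into the amalgam. -/
def ofA : A →* Amalg i j := (QuotientGroup.mk' _).comp Coprod.inl

/-- The canonical map of the factor `B` into the amalgam. -/
def ofB : B →* Amalg i j := (QuotientGroup.mk' _).comp Coprod.inr

/-- The image of the factor `A` in the amalgam. -/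
def AG : Set (Amalg i j) := Set.range (ofA i j)

/-- The image of the factor `B` in the amalgam. -/
def BG : Set (Amalg i j) := Set.range (ofB i j)

/-- The image of the amalgamated subgroup `C` in the amalgam. -/
def CG : Set (Amalg i j) := Set.range ((ofA i j).comp i)

/-- The double coset `C v C` in the amalgam. -/
def DCoset (v : Amalg i j) : Set (Amalg i j) :=
  {x | ∃ c1 ∈ CG i j, ∃ c2 ∈ CG i j, x = c1 * v * c2}

/-- A sequence `x₁, …, xₙ` of elements of the amalgam is reduced if every `xᵢ` lies in one of
the factors, successive `xᵢ, xᵢ₊₁` lie in different factors, no `xᵢ` lies in `C` when `n > 1`,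
and `x₁ ≠ 1` when `n = 1`. -/
def Reduced (l : List (Amalg i j)) : Prop :=
  (∀ x ∈ l, x ∈ AG i j ∪ BG i j) ∧
  List.Chain' (fun x y => ¬(x ∈ AG i j ∧ y ∈ AG i j) ∧ ¬(x ∈ BG i j ∧ y ∈ BG i j)) l ∧
  (1 < l.length → ∀ x ∈ l, x ∉ CG i j) ∧
  (l.length = 1 → ∀ x ∈ l, x ≠ 1)

/-- `g` is a group-palindrome if it has a reduced expression `x₁ ⋯ xₙ` whose reverse
`xₙ ⋯ x₁` represents the same element of the amalgam. -/
def GroupPalindrome (g : Amalg i j) : Prop :=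
  ∃ l : List (Amalg i j), Reduced i j l ∧ l.prod = g ∧ l.reverse.prod = g

/-- A special sequence (with respect to a fixed `a ∈ A`): an alternating sequence of elements
of the factors in which every syllable lying in the double coset `C a C` is the letter `a`
itself, and every syllable lying in `C a⁻¹ C` is the letter `a⁻¹` itself. -/
def IsSpecialSeq (a : A) (l : List (Amalg i j)) : Prop :=
  (∀ x ∈ l, x ∈ AG i j ∪ BG i j) ∧
  List.Chain' (fun x y => ¬(x ∈ AG i j ∧ y ∈ AG i j) ∧ ¬(x ∈ BG i j ∧ y ∈ BG i j)) l ∧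
  (1 < l.length → ∀ x ∈ l, x ∉ CG i j) ∧
  (∀ x ∈ l, x ∈ DCoset i j (ofA i j a) → x = ofA i j a) ∧
  (∀ x ∈ l, x ∈ DCoset i j (ofA i j a)⁻¹ → x = (ofA i j a)⁻¹)

/-- `l` is a special form of `g`: up to boundary elements `u, u'` of `C` (which arise when the
first or last syllable is replaced by `a^{±1}`), the special sequence `l` represents `g`. -/
def IsSpecialForm (a : A) (g : Amalg i j) (l : List (Amalg i j)) : Prop :=
  IsSpecialSeq i j a l ∧ ∃ u ∈ CG i j, ∃ u' ∈ CG i j, u * l.prod * u' = g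

/-- A chosen special form of `g`. -/
noncomputable def spform (a : A) (g : Amalg i j) : List (Amalg i j) :=
  if h : ∃ l : List (Amalg i j), IsSpecialForm i j a g l then Classical.choose h else []

/-- The number of `v`-segments of length `2k-1` in the list `l`: subwords
`v x₁ ⋯ x_{2k-1} v` with no `x_t = v`. -/
noncomputable def segCount (v : Amalg i j) (k : ℕ) (l : List (Amalg i j)) : ℕ :=
  ((Finset.range (l.length + 1)).filter fun s => ∃ l₁ m l₂ : List (Amalg i j),
    l = l₁ ++ [v] ++ m ++ [v] ++ l₂ ∧ l₁.length = s ∧ m.length = 2 * k - 1 ∧ v ∉ m).card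

/-- `p_k(g)`: the number of `a`-segments of length `2k-1` in the special form of `g`. -/
noncomputable def pk (a : A) (k : ℕ) (g : Amalg i j) : ℕ :=
  segCount i j (ofA i j a) k (spform i j a g)

/-- `m_k(g)`: the number of `a⁻¹`-segments of length `2k-1` in the special form of `g`. -/
noncomputable def mk (a : A) (k : ℕ) (g : Amalg i j) : ℕ :=
  segCount i j (ofA i j a)⁻¹ k (spform i j a g)

/-- `d_k = p_k - m_k`. -/
noncomputable def dk (a : A) (k : ℕ) (g : Amalg i j) : ℤ :=
  (pk i j a k g : ℤ) - (mk i j a k g : ℤ)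

/-- `r_k ∈ {0,1}`: the remainder of `d_k` modulo 2. -/
noncomputable def rk (a : A) (k : ℕ) (g : Amalg i j) : ℤ := dk i j a k g % 2

/-- The quasi-homomorphism `Δ(g) = Σ_{k ≥ 1} r_k(g)` (a finite sum, since `r_k = 0` for `k`
larger than the length of the special form). -/
noncomputable def Delta (a : A) (g : Amalg i j) : ℝ :=
  ∑ k ∈ Finset.Icc 1 (spform i j a g).length, (rk i j a k g : ℝ)

/-! ### Gaps in Boolean sequences -/

/-- The position of the first `true` of a Boolean list, if there is one. -/
def lead : List Bool → Option ℕ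
  | [] => none
  | true :: _ => some 0
  | false :: w => (lead w).map (· + 1)

/-- The multiset of gaps between consecutive `true`s of a Boolean list: a pair of consecutive
`true`s with `n` entries `false` in between contributes `n`. -/
def gaps : List Bool → Multiset ℕ
  | [] => 0
  | true :: w => (lead w).elim 0 (fun n => {n}) + gaps w
  | false :: w => gaps w

theorem gaps_append_of_lead_none (w w' : List Bool) (h : lead w = none) :
    gaps (w ++ w') = gaps w' ∧ gaps w = 0 := by
  induction w with
  | nil => simp [gaps]
  | cons b w ih => cases b <;> simp_all [gaps, lead]

theorem lead_append_of_some (w w' : List Bool) (n : ℕ) (h : lead w = some n) :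
    lead (w ++ w') = some n := by
  induction w generalizing n with
  | nil => simp [lead] at h
  | cons b w ih =>
    cases b
    · simp only [lead, Option.map_eq_some_iff, List.cons_append] at h ⊢
      obtain ⟨m, hm, rfl⟩ := h
      exact ⟨m, ih m hm, rfl⟩
    · simpa [lead] using h

theorem lead_append_true_of_none (w : List Bool) (h : lead w = none) :
    lead (w ++ [true]) = some w.length := by
  induction w with
  | nil => simp [lead]
  | cons b w ih => cases b <;> simp_all [lead]

theorem lead_eq_none_iff (w : List Bool) : lead w = none ↔ true ∉ w := by
  induction w with
  | nil => simp [lead]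
  | cons b w ih => cases b <;> simp_all [lead]

/-- Concatenation creates at most one new gap, the one straddling the junction. -/
theorem gaps_append (w w' : List Bool) :
    ∃ E : Multiset ℕ, E.card ≤ 1 ∧ gaps (w ++ w') = gaps w + gaps w' + E := by
  induction w with
  | nil => exact ⟨0, by simp, by simp [gaps]⟩
  | cons b w ih =>
    cases b
    · simpa [gaps] using ih
    · rcases hw : lead w with _ | n
      · obtain ⟨h1, h2⟩ := gaps_append_of_lead_none w w' hw
        refine ⟨(lead (w ++ w')).elim 0 (fun n => {n}), ?_, ?_⟩
        · cases lead (w ++ w') <;> simp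
        · simp [gaps, h1, h2, hw, add_comm]
      · obtain ⟨E, hE, h⟩ := ih
        refine ⟨E, hE, ?_⟩
        simp only [List.cons_append, gaps, lead_append_of_some w w' n hw, hw, h, add_assoc]

theorem gaps_append_true (w : List Bool) :
    gaps (w ++ [true]) = gaps w + (lead w.reverse).elim 0 (fun n => {n}) := by
  induction w with
  | nil => simp [gaps, lead]
  | cons b w ih =>
    rcases hw : lead w.reverse with _ | n
    · have hw' : lead w = none := by
        rw [lead_eq_none_iff] at hw ⊢; simpa using hw
      rw [hw] at ih
      cases b
      · have : lead (w.reverse ++ [false]) = none := by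
          rw [lead_eq_none_iff] at hw ⊢; simpa using hw
        simp [gaps, ih, this]
      · simp [gaps, ih, lead_append_true_of_none _ hw, lead_append_true_of_none _ hw', hw',
          add_comm]
    · rw [hw] at ih
      cases b
      · simp [gaps, ih, lead_append_of_some _ [false] n hw]
      · have : ∃ m, lead w = some m := by
          rw [← Option.ne_none_iff_exists', Ne, lead_eq_none_iff]
          have h2 : lead w.reverse ≠ none := by simp [hw]
          rw [Ne, lead_eq_none_iff] at h2
          simpa using h2
        obtain ⟨m, hm⟩ := this
        simp [gaps, ih, lead_append_of_some _ [true] n hw, lead_append_of_some _ [true] m hm, hm]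

theorem gaps_append_false (w : List Bool) : gaps (w ++ [false]) = gaps w := by
  induction w with
  | nil => simp [gaps]
  | cons b w ih =>
    cases b
    · simpa [gaps] using ih
    · rcases hw : lead w with _ | n
      · have : lead (w ++ [false]) = none := by
          rw [lead_eq_none_iff] at hw ⊢; simpa using hw
        simp [gaps, ih, hw, this]
      · simp [gaps, ih, hw, lead_append_of_some _ [false] n hw]

theorem gaps_reverse (w : List Bool) : gaps w.reverse = gaps w := by
  induction w with
  | nil => rfl
  | cons b w ih =>
    cases b
    · rw [List.reverse_cons, gaps_append_false, ih, gaps]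
    · rw [List.reverse_cons, gaps_append_true, ih, List.reverse_reverse, gaps, add_comm]

/-- Inserting a word of at most one letter between `P` and `Q` creates at most two gaps, and at
most one if that letter is not `true`. -/
theorem gaps_insert (P X Q : List Bool) (hX : X.length ≤ 1) :
    ∃ E : Multiset ℕ, E.card ≤ 1 + X.count true ∧ gaps (P ++ X ++ Q) = gaps P + gaps Q + E := by
  match X, hX with
  | [], _ => simpa using gaps_append P Q
  | [false], _ => simpa [gaps] using gaps_append P (false :: Q)
  | [true], _ =>
    obtain ⟨E, hE, h⟩ := gaps_append (P ++ [true]) Q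
    obtain ⟨E', hE', h'⟩ := gaps_append P [true]
    refine ⟨E' + E, by simp; omega, ?_⟩
    rw [h, h']
    simp [gaps, lead]
    abel

/-- The gaps of two disjoint indicator sequences of a word `P ++ X ++ Q` with `|X| ≤ 1`, counted
together, agree with those of `P` and `Q` up to at most three. -/
theorem gaps_pair {α : Type*} (f f' : α → Bool) (hff : ∀ x, f x = true → f' x = true → False)
    (P X Q : List α) (hX : X.length ≤ 1) :
    ∃ E : Multiset ℕ, E.card ≤ 3 ∧
      gaps ((P ++ X ++ Q).map f) + gaps ((P ++ X ++ Q).map f') =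
        (gaps (P.map f) + gaps (P.map f')) + (gaps (Q.map f) + gaps (Q.map f')) + E := by
  obtain ⟨E, hE, h⟩ := gaps_insert (P.map f) (X.map f) (Q.map f) (by simpa using hX)
  obtain ⟨E', hE', h'⟩ := gaps_insert (P.map f') (X.map f') (Q.map f') (by simpa using hX)
  refine ⟨E + E', ?_, ?_⟩
  · have : (X.map f).count true + (X.map f').count true ≤ 1 := by
      match X, hX with
      | [], _ => simp
      | [x], _ =>
        have := hff x
        rcases h1 : f x <;> rcases h2 : f' x <;> simp_all
    rw [Multiset.card_add]; omega
  · simp only [List.map_append] at h h' ⊢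
    rw [h, h']
    abel

theorem lead_map_eq_some_iff {α : Type*} (v : α) (l : List α) (n : ℕ) :
    lead (l.map (fun x => decide (x = v))) = some n ↔
      ∃ m l₂ : List α, l = m ++ [v] ++ l₂ ∧ m.length = n ∧ v ∉ m := by
  induction l generalizing n with
  | nil => simp [lead]
  | cons x l ih =>
    by_cases hx : x = v
    · subst hx
      simp only [List.map_cons, decide_true, lead, Option.some.injEq]
      constructor
      · rintro rfl
        exact ⟨[], l, by simp⟩
      · rintro ⟨m, l₂, h, hm, hv⟩
        cases m with
        | nil => simpa using hm
        | cons y m => simp at h; simp [h.1] at hv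
    · simp only [List.map_cons, hx, decide_false, lead, Option.map_eq_some_iff, ih]
      constructor
      · rintro ⟨k, ⟨m, l₂, rfl, rfl, hv⟩, rfl⟩
        exact ⟨x :: m, l₂, by simp, by simp, by simp [hv, Ne.symm hx]⟩
      · rintro ⟨m, l₂, h, hm, hv⟩
        cases m with
        | nil => simp at h; exact absurd h.1 hx
        | cons y m =>
          simp at h hv
          exact ⟨m.length, ⟨m, l₂, by simp [h.2], rfl, hv.2⟩, by simpa using hm⟩

/-- Counting subwords `v m v` with `|m| = n` and `v ∉ m` by their starting position amounts to
counting the gaps equal to `n` of the indicator sequence of `v`. -/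
theorem card_segments {α : Type*} (v : α) (n : ℕ) (l : List α) :
    ((Finset.range (l.length + 1)).filter fun s => ∃ l₁ m l₂ : List α,
      l = l₁ ++ [v] ++ m ++ [v] ++ l₂ ∧ l₁.length = s ∧ m.length = n ∧ v ∉ m).card =
    (gaps (l.map (fun x => decide (x = v)))).count n := by
  induction l with
  | nil => simp [gaps]
  | cons x l ih =>
    rw [Finset.card_filter] at ih ⊢
    rw [List.length_cons, Finset.sum_range_succ']
    have h1 : ∀ s, (∃ l₁ m l₂ : List α, x :: l = l₁ ++ [v] ++ m ++ [v] ++ l₂ ∧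
        l₁.length = s + 1 ∧ m.length = n ∧ v ∉ m) ↔
        (∃ l₁ m l₂ : List α, l = l₁ ++ [v] ++ m ++ [v] ++ l₂ ∧
        l₁.length = s ∧ m.length = n ∧ v ∉ m) := by
      intro s
      constructor
      · rintro ⟨l₁, m, l₂, h, hs, hm⟩
        cases l₁ with
        | nil => simp at hs
        | cons y l₁ =>
          simp at h
          exact ⟨l₁, m, l₂, by simp [h.2], by simpa using hs, hm⟩
      · rintro ⟨l₁, m, l₂, rfl, hs, hm⟩
        exact ⟨x :: l₁, m, l₂, by simp, by simpa using hs, hm⟩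
    have h2 : (∃ l₁ m l₂ : List α, x :: l = l₁ ++ [v] ++ m ++ [v] ++ l₂ ∧
        l₁.length = 0 ∧ m.length = n ∧ v ∉ m) ↔
        x = v ∧ lead (l.map (fun x => decide (x = v))) = some n := by
      rw [lead_map_eq_some_iff]
      constructor
      · rintro ⟨l₁, m, l₂, h, hs, hm⟩
        rw [List.length_eq_zero_iff] at hs
        subst hs
        simp at h
        exact ⟨h.1, m, l₂, by simp [h.2], hm⟩
      · rintro ⟨rfl, m, l₂, rfl, hm⟩
        exact ⟨[], m, l₂, by simp, rfl, hm⟩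
    simp only [h1, h2, ih]
    by_cases hx : x = v
    · rcases hl : lead (l.map (fun x => decide (x = v))) with _ | k
      · simp [hx, gaps, hl]
      · simp only [hx, List.map_cons, decide_true, gaps, hl, Option.elim_some, Multiset.count_add,
          Multiset.count_singleton, true_and, Option.some.injEq]
        rw [add_comm]
        simp only [eq_comm]
    · simp [hx, gaps]

theorem lead_lt (w : List Bool) (n : ℕ) (h : lead w = some n) : n < w.length := by
  induction w generalizing n with
  | nil => simp [lead] at h
  | cons b w ih =>
    cases b
    · simp only [lead, Option.map_eq_some_iff] at h
      obtain ⟨m, hm, rfl⟩ := h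
      simpa using ih m hm
    · simp [lead] at h; simp [← h]

theorem lt_length_of_mem_gaps (w : List Bool) (n : ℕ) (h : n ∈ gaps w) : n < w.length := by
  induction w with
  | nil => simp [gaps] at h
  | cons b w ih =>
    cases b
    · exact (ih h).trans (by simp)
    · simp only [gaps, Multiset.mem_add] at h
      rcases h with h | h
      · rcases hw : lead w with _ | m
        · simp [hw] at h
        · simp [hw] at h
          have := lead_lt w m hw
          simp; omega
      · exact (ih h).trans (by simp)

theorem sum_count_le_card (E : Multiset ℕ) (s : Finset ℕ) : ∑ n ∈ s, E.count n ≤ E.card := by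
  induction E using Multiset.induction_on with
  | empty => simp
  | cons x E ih =>
    simp only [Multiset.count_cons, Finset.sum_add_distrib, Multiset.card_cons]
    refine add_le_add ih ?_
    rw [Finset.sum_ite_eq']
    split <;> simp

theorem sum_count_odd_le_card (E : Multiset ℕ) (N : ℕ) :
    ∑ k ∈ Finset.Icc 1 N, E.count (2 * k - 1) ≤ E.card := by
  have hinj : Set.InjOn (fun k => 2 * k - 1) (Finset.Icc 1 N : Finset ℕ) := by
    intro x hx y hy h
    simp at hx hy h
    omega
  rw [← Finset.sum_image (s := Finset.Icc 1 N) (g := fun k => 2 * k - 1)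
    (f := fun n => E.count n) hinj]
  exact sum_count_le_card E _

/-! ### Alternating words in a group with two subgroups -/

section Abstract

variable {G : Type*} [Group G]

/-- A word in the factors `A`, `B` of `G`, none of whose letters lies in `C`, and in which
adjacent letters lie in different factors. -/
structure Alternating (A B C : Subgroup G) (l : List G) : Prop where
  mem : ∀ x ∈ l, x ∈ A ∨ x ∈ B
  notMem : ∀ x ∈ l, x ∉ C
  chain : l.IsChain (fun x y => ¬(x ∈ A ∧ y ∈ A) ∧ ¬(x ∈ B ∧ y ∈ B))

/-- The double coset `C x C`. -/
def dc (C : Subgroup G) (x : G) : Set G := {y | ∃ c ∈ C, ∃ c' ∈ C, y = c * x * c'}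

theorem mem_dc_self (C : Subgroup G) (x : G) : x ∈ dc C x :=
  ⟨1, C.one_mem, 1, C.one_mem, by simp⟩

theorem mem_dc_iff {C : Subgroup G} {x y : G} : y ∈ dc C x ↔ dc C y = dc C x := by
  constructor
  · rintro ⟨c, hc, c', hc', rfl⟩
    ext z
    constructor
    · rintro ⟨d, hd, d', hd', rfl⟩
      exact ⟨d * c, C.mul_mem hd hc, c' * d', C.mul_mem hc' hd', by group⟩
    · rintro ⟨d, hd, d', hd', rfl⟩
      exact ⟨d * c⁻¹, C.mul_mem hd (C.inv_mem hc), c'⁻¹ * d', C.mul_mem (C.inv_mem hc') hd',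
        by group⟩
  · intro h
    exact h ▸ mem_dc_self C y

theorem dc_mul {C : Subgroup G} {c c' : G} (hc : c ∈ C) (hc' : c' ∈ C) (x : G) :
    dc C (c * x * c') = dc C x :=
  mem_dc_iff.1 ⟨c, hc, c', hc', rfl⟩

theorem dc_inv_eq_iff {C : Subgroup G} {x y : G} : dc C x⁻¹ = dc C y ↔ dc C x = dc C y⁻¹ := by
  rw [← mem_dc_iff, ← mem_dc_iff]
  constructor <;> rintro ⟨c, hc, c', hc', h⟩ <;>
    refine ⟨c'⁻¹, C.inv_mem hc', c⁻¹, C.inv_mem hc, ?_⟩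
  · rw [← inv_inv x, h]; group
  · rw [h]; group

theorem dc_subset_iff {C A : Subgroup G} (hCA : C ≤ A) (x : G) : dc C x ⊆ A ↔ x ∈ A := by
  constructor
  · intro h
    exact h (mem_dc_self C x)
  · rintro h _ ⟨c, hc, c', hc', rfl⟩
    exact A.mul_mem (A.mul_mem (hCA hc) h) (hCA hc')

variable {A B C : Subgroup G}

/-- Whether a word is alternating depends only on the double cosets of its letters. -/
theorem Alternating.congr (hCA : C ≤ A) (hCB : C ≤ B) {l l' : List G}
    (h : l.map (dc C) = l'.map (dc C)) (hl : Alternating A B C l) : Alternating A B C l' := by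
  have key : ∀ l, Alternating A B C l ↔
      (∀ X ∈ l.map (dc C), X ⊆ A ∨ X ⊆ B) ∧ (∀ X ∈ l.map (dc C), ¬ X ⊆ C) ∧
      (l.map (dc C)).IsChain
        (fun X Y : Set G => ¬(X ⊆ A ∧ Y ⊆ A) ∧ ¬(X ⊆ B ∧ Y ⊆ B)) := by
    intro l
    simp only [List.isChain_map, dc_subset_iff hCA, dc_subset_iff hCB, dc_subset_iff le_rfl,
      List.forall_mem_map]
    exact ⟨fun h => ⟨h.1, h.2, h.3⟩, fun h => ⟨h.1, h.2.1, h.2.2⟩⟩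
  rw [key] at hl ⊢
  rwa [← h]

theorem Alternating.reverse {l : List G} (hl : Alternating A B C l) :
    Alternating A B C l.reverse := by
  refine ⟨fun x hx => hl.mem x (by simpa using hx), fun x hx => hl.notMem x (by simpa using hx),
    ?_⟩
  rw [List.isChain_reverse]
  exact hl.chain.imp (fun x y h => by tauto)

theorem Alternating.map_inv {l : List G} (hl : Alternating A B C l) :
    Alternating A B C (l.map (·⁻¹)) := by
  refine ⟨?_, ?_, ?_⟩
  · rw [List.forall_mem_map]
    simpa using hl.mem
  · rw [List.forall_mem_map]
    simpa using hl.notMem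
  · simpa [List.isChain_map] using hl.chain

theorem Alternating.append {l l' : List G} (hl : Alternating A B C l) (hl' : Alternating A B C l')
    (h : ∀ x ∈ l.getLast?, ∀ y ∈ l'.head?, ¬(x ∈ A ∧ y ∈ A) ∧ ¬(x ∈ B ∧ y ∈ B)) :
    Alternating A B C (l ++ l') := by
  refine ⟨fun x hx => ?_, fun x hx => ?_, List.isChain_append.2 ⟨hl.chain, hl'.chain, h⟩⟩
  · rcases List.mem_append.1 hx with hx | hx
    exacts [hl.mem x hx, hl'.mem x hx]
  · rcases List.mem_append.1 hx with hx | hx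
    exacts [hl.notMem x hx, hl'.notMem x hx]

theorem Alternating.tail {x : G} {l : List G} (hl : Alternating A B C (x :: l)) :
    Alternating A B C l :=
  ⟨fun y hy => hl.mem y (List.mem_cons_of_mem _ hy),
    fun y hy => hl.notMem y (List.mem_cons_of_mem _ hy), (List.isChain_cons.1 hl.chain).2⟩

theorem alternating_nil : Alternating A B C [] := ⟨by simp, by simp, by simp⟩

theorem alternating_singleton {x : G} (hx : x ∈ A ∨ x ∈ B) (hxC : x ∉ C) :
    Alternating A B C [x] := ⟨by simpa using hx, by simpa using hxC, by simp⟩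

/-- The product of two alternating words. The word `r` is the first factor read backwards, and
`c ∈ C` is inserted at the junction. After cancelling `Q` against `Q'`, whose letters are inverse
to each other up to `C` on both sides, either the remaining words are concatenated (`X`, `Y`, `Z`
empty), or a letter `X` of the first and a letter `Y` of the second merge into one letter `Z`. -/
theorem tripod (hCA : C ≤ A) (hCB : C ≤ B) (hAB : ∀ x, x ∈ A → x ∈ B → x ∈ C)
    (r : List G) : ∀ (s : List G) (c : G), c ∈ C → Alternating A B C r → Alternating A B C s →
    ∃ P X Q Q' Y S Z L : List G, r = Q ++ X ++ P ∧ s = Q' ++ Y ++ S ∧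
      Z.length ≤ 1 ∧ X.length = Z.length ∧ Y.length = Z.length ∧
      Q'.map (dc C) = Q.map (fun x => dc C x⁻¹) ∧
      L.map (dc C) = (P.reverse ++ Z ++ S).map (dc C) ∧ Alternating A B C L ∧
      ∃ u ∈ C, ∃ u' ∈ C, r.reverse.prod * c * s.prod = u * L.prod * u' := by
  induction r with
  | nil =>
    intro s c hc _ hs
    exact ⟨[], [], [], [], [], s, [], s, by simp, by simp, by simp, rfl, rfl, rfl, by simp, hs,
      c, hc, 1, C.one_mem, by simp⟩
  | cons x t ih =>
    intro s c hc hr hs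
    match s with
    | [] =>
      exact ⟨x :: t, [], [], [], [], [], [], (x :: t).reverse, by simp, by simp, by simp, rfl, rfl,
        rfl, by simp, hr.reverse, 1, C.one_mem, c, hc, by simp⟩
    | y :: s =>
      by_cases hR : ¬(x ∈ A ∧ y ∈ A) ∧ ¬(x ∈ B ∧ y ∈ B)
      · have hm : ((x :: t).reverse ++ y :: s).map (dc C) =
            ((x :: t).reverse ++ (c * y) :: s).map (dc C) := by
          have := dc_mul hc C.one_mem y
          rw [mul_one] at this
          simp [this]
        refine ⟨x :: t, [], [], [], [], y :: s, [], (x :: t).reverse ++ (c * y) :: s, by simp,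
          by simp, by simp, rfl, rfl, rfl, ?_, ?_, 1, C.one_mem, 1, C.one_mem, ?_⟩
        · rw [← hm, List.append_nil]
        · exact (hr.reverse.append hs (by simpa using hR)).congr hCA hCB hm
        · simp [mul_assoc]
      · have hsame : (x ∈ A ∧ y ∈ A) ∨ (x ∈ B ∧ y ∈ B) := by tauto
        by_cases hz : x * c * y ∈ C
        · obtain ⟨P, X, Q, Q', Y, S, Z, L, rfl, rfl, hZ, hX, hY, hQ, hL, hLa, u, hu, u', hu', h⟩ :=
            ih s (x * c * y) hz hr.tail hs.tail
          refine ⟨P, X, x :: Q, y :: Q', Y, S, Z, L, by simp, by simp, hZ, hX, hY, ?_, hL, hLa,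
            u, hu, u', hu', ?_⟩
          · have : dc C y = dc C x⁻¹ :=
              mem_dc_iff.1 ⟨c⁻¹, C.inv_mem hc, x * c * y, hz, by group⟩
            simp [hQ, this]
          · rw [← h]
            simp [mul_assoc]
        · have hxC := hr.notMem x (by simp)
          have hyC := hs.notMem y (by simp)
          have hr1 := (List.isChain_cons.1 hr.chain).1
          have hs1 := (List.isChain_cons.1 hs.chain).1
          have hzs : (x ∈ A ∧ y ∈ A ∧ x * c * y ∈ A ∧ x * c * y ∉ B) ∨
              (x ∈ B ∧ y ∈ B ∧ x * c * y ∈ B ∧ x * c * y ∉ A) := by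
            rcases hsame with ⟨h1, h2⟩ | ⟨h1, h2⟩
            · have h3 := A.mul_mem (A.mul_mem h1 (hCA hc)) h2
              exact Or.inl ⟨h1, h2, h3, fun h4 => hz (hAB _ h3 h4)⟩
            · have h3 := B.mul_mem (B.mul_mem h1 (hCB hc)) h2
              exact Or.inr ⟨h1, h2, h3, fun h4 => hz (hAB _ h4 h3)⟩
          refine ⟨t, [x], [], [], [y], s, [x * c * y], t.reverse ++ ([x * c * y] ++ s), by simp,
            by simp, by simp, rfl, rfl, rfl, by simp, ?_, 1, C.one_mem, 1, C.one_mem, ?_⟩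
          · refine hr.tail.reverse.append
              ((alternating_singleton (by tauto) hz).append hs.tail ?_) ?_
            · intro z hz' w hw
              have := hs1 w hw
              simp at hz'
              subst hz'
              tauto
            · intro w hw z hz'
              have := hr1 w (by simpa using hw)
              simp at hz'
              subst hz'
              tauto
          · simp [mul_assoc]

theorem prod_reverse_map_inv (l : List G) : (l.map (·⁻¹)).reverse.prod = l.prod⁻¹ := by
  rw [List.prod_inv_reverse]

/-- Uniqueness of alternating words, up to the double cosets of their letters. It follows from
`tripod` applied to the quotient of the two words, which lies in `C`, so that cancellation has to
be complete. -/
theorem map_dc_eq (hCA : C ≤ A) (hCB : C ≤ B) (hAB : ∀ x, x ∈ A → x ∈ B → x ∈ C)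
    (hK : ∀ l, Alternating A B C l → l ≠ [] → l.prod ∉ C)
    {l l' : List G} (hl : Alternating A B C l) (hl' : Alternating A B C l')
    {c c' : G} (hc : c ∈ C) (hc' : c' ∈ C) (h : l'.prod = c * l.prod * c') :
    l.map (dc C) = l'.map (dc C) := by
  obtain ⟨P, X, Q, Q', Y, S, Z, L, hr, hs, hZ, hX, hY, hQ, hL, hLa, u, hu, u', hu', hp⟩ :=
    tripod hCA hCB hAB (l'.map (·⁻¹)) l c hc hl'.map_inv hl
  rw [prod_reverse_map_inv, h] at hp
  have hLnil : L = [] := by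
    by_contra hne
    refine hK L hLa hne ?_
    have : L.prod = u⁻¹ * c'⁻¹ * u'⁻¹ := by
      have h2 : c'⁻¹ = u * L.prod * u' := by rw [← hp]; group
      rw [h2]; group
    rw [this]
    exact C.mul_mem (C.mul_mem (C.inv_mem hu) (C.inv_mem hc')) (C.inv_mem hu')
  subst hLnil
  simp only [List.map_nil, List.nil_eq, List.map_eq_nil_iff, List.append_eq_nil_iff,
    List.reverse_eq_nil_iff] at hL
  obtain ⟨⟨rfl, rfl⟩, rfl⟩ := hL
  simp only [List.length_nil, List.length_eq_zero_iff] at hX hY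
  subst hX hY
  simp only [List.append_nil] at hr hs
  rw [hs, hQ, ← hr, List.map_map]
  simp [Function.comp_def]

/-- Every alternating word can be rewritten, letter by letter and up to elements of `C` at its
ends, so that its letters in `C α C` and `C α⁻¹ C` become `α` and `α⁻¹`. The left boundary element
is trivial when the word starts in `B`; this lets a letter of `A` pass its right error term `u'`
on to the rest of the word. -/
theorem exists_special (hCB : C ≤ B) (hAB : ∀ x, x ∈ A → x ∈ B → x ∈ C)
    {α : G} (hα : α ∈ A) (hαC : α ∉ C) (hne : dc C α ≠ dc C α⁻¹) (L : List G) :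
    ∀ c₀ ∈ C, Alternating A B C L → ∃ l : List G, L.map (dc C) = l.map (dc C) ∧
      (∀ x ∈ l, (x ∈ dc C α → x = α) ∧ (x ∈ dc C α⁻¹ → x = α⁻¹)) ∧
      ∃ c ∈ C, ∃ c' ∈ C, c₀ * L.prod = c * l.prod * c' ∧ ((∀ x ∈ L.head?, x ∈ B) → c = 1) := by
  induction L with
  | nil =>
    intro c₀ hc₀ _
    exact ⟨[], rfl, by simp, 1, C.one_mem, c₀, hc₀, by simp, by simp⟩
  | cons x L ih =>
    intro c₀ hc₀ hL
    have hxC := hL.notMem x (by simp)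
    by_cases hxB : x ∈ B
    · obtain ⟨l, hm, hl, c, hc, c', hc', hp, -⟩ := ih 1 C.one_mem hL.tail
      refine ⟨(c₀ * x * c) :: l, by simp [dc_mul hc₀ hc, hm], ?_, 1, C.one_mem, c', hc', ?_,
        fun _ => rfl⟩
      · have hB : ∀ β, c₀ * x * c ∈ dc C β → β ∈ B := by
          intro β hβ
          rw [mem_dc_iff, dc_mul hc₀ hc] at hβ
          rw [← dc_subset_iff hCB, ← hβ, dc_subset_iff hCB]
          exact hxB
        have hαB : α ∉ B := fun h => hαC (hAB _ hα h)
        intro y hy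
        rcases List.mem_cons.1 hy with rfl | hy
        · exact ⟨fun h => absurd (hB _ h) hαB,
            fun h => absurd (hB _ h) (by simpa using hαB)⟩
        · exact hl y hy
      · rw [one_mul] at hp
        simp [hp, mul_assoc]
    · have hxA : x ∈ A := (hL.mem x (by simp)).resolve_right hxB
      have hrep : ∃ β, ∃ u ∈ C, ∃ u' ∈ C, c₀ * x = u * β * u' ∧
          (β ∈ dc C α → β = α) ∧ (β ∈ dc C α⁻¹ → β = α⁻¹) := by
        by_cases h1 : c₀ * x ∈ dc C α
        · obtain ⟨u, hu, u', hu', h⟩ := h1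
          exact ⟨α, u, hu, u', hu', h, fun _ => rfl, fun h => absurd (mem_dc_iff.1 h) hne⟩
        by_cases h2 : c₀ * x ∈ dc C α⁻¹
        · obtain ⟨u, hu, u', hu', h⟩ := h2
          exact ⟨α⁻¹, u, hu, u', hu', h, fun h => absurd (mem_dc_iff.1 h).symm hne, fun _ => rfl⟩
        · exact ⟨c₀ * x, 1, C.one_mem, 1, C.one_mem, by simp, fun h => absurd h h1,
            fun h => absurd h h2⟩
      obtain ⟨β, u, hu, u', hu', hβ, hβ'⟩ := hrep
      obtain ⟨l, hm, hl, c, hc, c', hc', hp, hc1⟩ := ih u' hu' hL.tail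
      have hc1 : c = 1 := by
        refine hc1 fun y hy => ?_
        have h1 := (List.isChain_cons.1 hL.chain).1 y hy
        have h2 := hL.mem y (List.mem_cons_of_mem _ (List.mem_of_mem_head? hy))
        tauto
      subst hc1
      refine ⟨β :: l, ?_, ?_, u, hu, c', hc', ?_, ?_⟩
      · have h1 := dc_mul hc₀ C.one_mem x
        rw [mul_one, hβ, dc_mul hu hu'] at h1
        simp [h1, hm]
      · intro y hy
        rcases List.mem_cons.1 hy with rfl | hy
        exacts [hβ', hl y hy]
      · rw [List.prod_cons, ← mul_assoc, hβ, mul_assoc, hp, List.prod_cons]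
        group
      · intro h
        exact absurd (h x (by simp)) hxB

end Abstract

/-! ### The amalgam -/

section Amalgam

/-- The factor `A` as a subgroup of the amalgam. -/
abbrev HA : Subgroup (Amalg i j) := (ofA i j).range

/-- The factor `B` as a subgroup of the amalgam. -/
abbrev HB : Subgroup (Amalg i j) := (ofB i j).range

/-- The amalgamated subgroup `C` as a subgroup of the amalgam. -/
abbrev HC : Subgroup (Amalg i j) := ((ofA i j).comp i).range

theorem ofA_eq_ofB (c : C) : ofA i j (i c) = ofB i j (j c) := by
  rw [← mul_inv_eq_one, ← map_inv]
  change (QuotientGroup.mk _ : Amalg i j) * QuotientGroup.mk _ = 1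
  rw [← QuotientGroup.mk_mul, QuotientGroup.eq_one_iff]
  exact Subgroup.subset_normalClosure ⟨c, by simp⟩

theorem HC_le_HA : HC i j ≤ HA i j := by
  rintro _ ⟨c, rfl⟩
  exact ⟨i c, rfl⟩

theorem HC_le_HB : HC i j ≤ HB i j := by
  rintro _ ⟨c, rfl⟩
  exact ⟨j c, (ofA_eq_ofB i j c).symm⟩

/-- The normal form theorem for the amalgam: the factors meet in `C` only, and the product of a
nonempty alternating word is not in `C`. It is transferred from `Monoid.PushoutI` over the index
type `Bool`; the family `M` is a copy of `A` and `B` in a common universe. -/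
theorem normal_form_aux {M : Bool → Type*} [∀ b, Group (M b)] (eA : A ≃* M true)
    (eB : B ≃* M false) (ψ : ∀ b, C →* M b) (ht : ∀ c, ψ true c = eA (i c))
    (hf : ∀ c, ψ false c = eB (j c)) (hi : Function.Injective i) (hj : Function.Injective j) :
    (∀ x, x ∈ HA i j → x ∈ HB i j → x ∈ HC i j) ∧
    ∀ l, Alternating (HA i j) (HB i j) (HC i j) l → l ≠ [] → l.prod ∉ HC i j := by
  have hψ : ∀ b, Function.Injective (ψ b) := by
    rintro (_ | _) x y h
    · rw [hf, hf] at h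
      exact hj (eB.injective h)
    · rw [ht, ht] at h
      exact hi (eA.injective h)
  let θ : Coprod A B →* PushoutI ψ := Coprod.lift
    ((PushoutI.of (φ := ψ) true).comp eA.toMonoidHom)
    ((PushoutI.of (φ := ψ) false).comp eB.toMonoidHom)
  have hθ : Subgroup.normalClosure
      {x : Coprod A B | ∃ c : C, x = Coprod.inl (i c) * (Coprod.inr (j c))⁻¹} ≤ θ.ker := by
    apply Subgroup.normalClosure_le_normal
    rintro _ ⟨c, rfl⟩
    have h1 : PushoutI.of (φ := ψ) true (eA (i c)) = PushoutI.of (φ := ψ) false (eB (j c)) := by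
      rw [← ht, ← hf, PushoutI.of_apply_eq_base, PushoutI.of_apply_eq_base]
    simp [θ, MonoidHom.mem_ker, h1]
  let Θ : Amalg i j →* PushoutI ψ := QuotientGroup.lift _ θ hθ
  have hΘA : ∀ x, Θ (ofA i j x) = PushoutI.of (φ := ψ) true (eA x) := fun x => by
    change θ (Coprod.inl x) = _
    simp [θ]
  have hΘB : ∀ x, Θ (ofB i j x) = PushoutI.of (φ := ψ) false (eB x) := fun x => by
    change θ (Coprod.inr x) = _
    simp [θ]
  have hAB : ∀ x, x ∈ HA i j → x ∈ HB i j → x ∈ HC i j := by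
    rintro _ ⟨x, rfl⟩ ⟨y, hy⟩
    have : Θ (ofA i j x) ∈ (PushoutI.of (φ := ψ) true).range ⊓
        (PushoutI.of (φ := ψ) false).range := by
      refine ⟨⟨eA x, (hΘA x).symm⟩, ?_⟩
      rw [← hy]
      exact ⟨eB y, (hΘB y).symm⟩
    rw [PushoutI.inf_of_range_eq_base_range hψ (by simp)] at this
    obtain ⟨c, hc⟩ := this
    rw [hΘA, ← PushoutI.of_apply_eq_base ψ true, ht] at hc
    have := eA.injective (PushoutI.of_injective hψ true hc)
    exact ⟨c, by rw [← this]; rfl⟩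
  refine ⟨hAB, fun l hl hne hlC => ?_⟩
  have hF : ∀ x : Amalg i j, ∃ p : Σ b, M b, (x ∈ HA i j ∨ x ∈ HB i j) → x ∉ HC i j →
      Θ x = PushoutI.of (φ := ψ) p.1 p.2 ∧ p.2 ∉ (ψ p.1).range ∧
      (p.1 = true → x ∈ HA i j) ∧ (p.1 = false → x ∈ HB i j) := by
    intro x
    by_cases hA : x ∈ HA i j
    · obtain ⟨y, rfl⟩ := hA
      refine ⟨⟨true, eA y⟩, fun _ hC => ⟨hΘA y, ?_, fun _ => ⟨y, rfl⟩, by simp⟩⟩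
      rintro ⟨c, hc⟩
      rw [ht] at hc
      exact hC ⟨c, by rw [← eA.injective hc]; rfl⟩
    · by_cases hB : x ∈ HB i j
      · obtain ⟨y, rfl⟩ := hB
        refine ⟨⟨false, eB y⟩, fun _ hC => ⟨hΘB y, ?_, by simp, fun _ => ⟨y, rfl⟩⟩⟩
        rintro ⟨c, hc⟩
        rw [hf] at hc
        exact hC ⟨c, by rw [← eB.injective hc]; exact ofA_eq_ofB i j c⟩
      · exact ⟨⟨true, 1⟩, by tauto⟩
  choose F hF using hF
  have hF' : ∀ x ∈ l, _ := fun x hx => hF x (hl.mem x hx) (hl.notMem x hx)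
  let w : CoprodI.Word M :=
    { toList := l.map F
      ne_one := by
        rw [List.forall_mem_map]
        intro x hx h1
        refine (hF' x hx).2.1 ?_
        rw [h1]
        exact one_mem _
      chain_ne := by
        rw [List.isChain_map]
        refine hl.chain.imp_of_mem_imp ?_
        intro x y hx hy hR heq
        have h1 := (hF' x hx).2.2
        have h2 := (hF' y hy).2.2
        rw [← heq] at h2
        rcases hb : (F x).1 with _ | _
        · exact hR.2 ⟨h1.2 hb, h2.2 hb⟩
        · exact hR.1 ⟨h1.1 hb, h2.1 hb⟩ }
  have hw : PushoutI.Reduced ψ w := by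
    change ∀ g ∈ l.map F, _
    rw [List.forall_mem_map]
    exact fun x hx => (hF' x hx).2.1
  have hprod : PushoutI.ofCoprodI (φ := ψ) w.prod = Θ l.prod := by
    change PushoutI.ofCoprodI ((l.map F).map fun p => CoprodI.of p.2).prod = _
    rw [map_list_prod, map_list_prod, List.map_map, List.map_map]
    congr 1
    refine List.map_congr_left fun x hx => ?_
    rw [(hF' x hx).1]
    simp
  have hempty : w = CoprodI.Word.empty := by
    refine hw.eq_empty_of_mem_range hψ ?_
    rw [hprod]
    obtain ⟨c, hc⟩ := hlC
    refine ⟨c, ?_⟩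
    rw [← hc, MonoidHom.comp_apply, hΘA, ← ht, PushoutI.of_apply_eq_base]
  have : l.map F = [] := congrArg CoprodI.Word.toList hempty
  exact hne (by simpa using this)

universe u v in
theorem normal_form {A : Type u} {B : Type v} {C : Type*} [Group A] [Group B] [Group C]
    (i : C →* A) (j : C →* B) (hi : Function.Injective i) (hj : Function.Injective j) :
    (∀ x, x ∈ HA i j → x ∈ HB i j → x ∈ HC i j) ∧
    ∀ l, Alternating (HA i j) (HB i j) (HC i j) l → l ≠ [] → l.prod ∉ HC i j := by
  obtain ⟨M, _, ⟨eA⟩, ⟨eB⟩⟩ : ∃ (M : Bool → Type (max u v)) (_ : ∀ b, Group (M b)),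
      Nonempty (A ≃* M true) ∧ Nonempty (B ≃* M false) :=
    ⟨fun b => Bool.rec (ULift.{u} B) (ULift.{v} A) b,
      fun b => match b with
        | true => inferInstanceAs (Group (ULift.{v} A))
        | false => inferInstanceAs (Group (ULift.{u} B)),
      ⟨MulEquiv.ulift.symm⟩, ⟨MulEquiv.ulift.symm⟩⟩
  let ψ : ∀ b, C →* M b := fun b =>
    match b with
    | true => eA.toMonoidHom.comp i
    | false => eB.toMonoidHom.comp j
  exact normal_form_aux i j eA eB ψ (fun _ => rfl) (fun _ => rfl) hi hj

/-- Every element is represented by an alternating word, up to elements of `C` at its ends. -/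
theorem exists_alternating (hAB : ∀ x, x ∈ HA i j → x ∈ HB i j → x ∈ HC i j) (g : Amalg i j) :
    ∃ L, Alternating (HA i j) (HB i j) (HC i j) L ∧
      ∃ u ∈ HC i j, ∃ u' ∈ HC i j, g = u * L.prod * u' := by
  have hone : ∀ x, x ∈ HA i j ∨ x ∈ HB i j → ∃ L, Alternating (HA i j) (HB i j) (HC i j) L ∧
      ∃ u ∈ HC i j, ∃ u' ∈ HC i j, x = u * L.prod * u' := by
    intro x hx
    by_cases hC : x ∈ HC i j
    · exact ⟨[], alternating_nil, x, hC, 1, one_mem _, by simp⟩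
    · exact ⟨[x], alternating_singleton hx hC, 1, one_mem _, 1, one_mem _, by simp⟩
  obtain ⟨g, rfl⟩ := QuotientGroup.mk_surjective g
  induction g using Coprod.induction_on with
  | inl x => exact hone _ (Or.inl ⟨x, rfl⟩)
  | inr x => exact hone _ (Or.inr ⟨x, rfl⟩)
  | mul x y hx hy =>
    obtain ⟨L, hL, u, hu, u', hu', h⟩ := hx
    obtain ⟨L', hL', v, hv, v', hv', h'⟩ := hy
    obtain ⟨-, -, -, -, -, -, -, L₃, -, -, -, -, -, -, -, h3, w, hw, w', hw', hp⟩ :=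
      tripod (HC_le_HA i j) (HC_le_HB i j) hAB L.reverse L' (u' * v) (mul_mem hu' hv)
        hL.reverse hL'
    refine ⟨L₃, h3, u * w, mul_mem hu hw, w' * v', mul_mem hw' hv', ?_⟩
    rw [List.reverse_reverse] at hp
    calc _ = u * (L.prod * (u' * v) * L'.prod) * v' := by
          rw [QuotientGroup.mk_mul, h, h']; group
      _ = _ := by rw [hp]; group

/-- The indicator sequence of the double coset `C v C` along a word. -/
noncomputable def ind (v : Amalg i j) (l : List (Amalg i j)) : List Bool :=
  l.map fun x => decide (dc (HC i j) x = dc (HC i j) v)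

theorem isSpecialForm_spform (hAB : ∀ x, x ∈ HA i j → x ∈ HB i j → x ∈ HC i j) (a : A)
    (haC : ofA i j a ∉ HC i j) (hne : dc (HC i j) (ofA i j a) ≠ dc (HC i j) (ofA i j a)⁻¹)
    (g : Amalg i j) : IsSpecialForm i j a g (spform i j a g) := by
  have hex : ∃ l, IsSpecialForm i j a g l := by
    obtain ⟨L, hL, u, hu, u', hu', rfl⟩ := exists_alternating i j hAB g
    obtain ⟨l, hm, hl, c, hc, c', hc', hp, -⟩ := exists_special (HC_le_HB i j) hAB
      ⟨a, rfl⟩ haC hne L 1 (one_mem _) hL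
    have hl' := hL.congr (HC_le_HA i j) (HC_le_HB i j) hm
    rw [one_mul] at hp
    refine ⟨l, ⟨hl'.mem, hl'.chain, fun _ => hl'.notMem, fun x hx => (hl x hx).1,
      fun x hx => (hl x hx).2⟩, u * c, mul_mem hu hc, c' * u', mul_mem hc' hu', ?_⟩
    rw [hp]; group
  rw [spform, dif_pos hex]
  exact Classical.choose_spec hex

/-- The segments of a special form are the gaps of an alternating word for the same element. The
word can differ from the special form only in that a single letter lying in `C`, which
`IsSpecialSeq` admits, is dropped. -/
theorem IsSpecialForm.exists_alternating {a : A} {g : Amalg i j} {l : List (Amalg i j)}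
    (h : IsSpecialForm i j a g l) :
    ∃ L, Alternating (HA i j) (HB i j) (HC i j) L ∧
      (∃ u ∈ HC i j, ∃ u' ∈ HC i j, u * L.prod * u' = g) ∧
      ∀ k, segCount i j (ofA i j a) k l = (gaps (ind i j (ofA i j a) L)).count (2 * k - 1) ∧
        segCount i j (ofA i j a)⁻¹ k l = (gaps (ind i j (ofA i j a)⁻¹ L)).count (2 * k - 1) := by
  obtain ⟨⟨hmem, hchain, hC, hp, hm⟩, u, hu, u', hu', hg⟩ := h
  by_cases hl : Alternating (HA i j) (HB i j) (HC i j) l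
  · have hind : ∀ v, (∀ x ∈ l, x ∈ DCoset i j v → x = v) → ∀ k,
        segCount i j v k l = (gaps (ind i j v l)).count (2 * k - 1) := by
      intro v hv k
      rw [segCount, card_segments, ind]
      congr 2
      refine List.map_congr_left fun x hx => ?_
      rw [decide_eq_decide]
      exact ⟨fun h => by rw [h], fun h => hv x hx (mem_dc_iff.2 h)⟩
    exact ⟨l, hl, ⟨u, hu, u', hu', hg⟩, fun k => ⟨hind _ hp k, hind _ hm k⟩⟩
  · have hlen : ¬ 1 < l.length := fun hlt => hl ⟨hmem, hC hlt, hchain⟩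
    rcases l with _ | ⟨x, _ | ⟨y, l⟩⟩
    · exact absurd alternating_nil hl
    · have hx : x ∈ HC i j := by
        by_contra hx
        exact hl (alternating_singleton (hmem x (by simp)) hx)
      have h0 : ∀ v k, segCount i j v k [x] = 0 := by
        intro v k
        rw [segCount, card_segments, List.map_singleton]
        have h1 : ∀ b, gaps [b] = 0 := by rintro (_ | _) <;> rfl
        rw [h1, Multiset.count_zero]
      refine ⟨[], alternating_nil, ⟨u * x, mul_mem hu hx, u', hu', by simpa using hg⟩,
        fun k => ⟨?_, ?_⟩⟩ <;> simp [h0, ind, gaps]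
    · simp at hlen

theorem segCount_eq_zero (v : Amalg i j) (k : ℕ) (hk : 1 ≤ k) (l : List (Amalg i j))
    (h : l.length < k) : segCount i j v k l = 0 := by
  rw [segCount, card_segments, Multiset.count_eq_zero]
  intro hm
  have := lt_length_of_mem_gaps _ _ hm
  rw [List.length_map] at this
  omega

theorem Delta_eq_sum (a : A) (g : Amalg i j) (N : ℕ) (hN : (spform i j a g).length ≤ N) :
    Delta i j a g = ((∑ k ∈ Finset.Icc 1 N, rk i j a k g : ℤ) : ℝ) := by
  rw [Delta, Int.cast_sum]
  refine Finset.sum_subset (Finset.Icc_subset_Icc le_rfl hN) fun k hk hk' => ?_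
  rw [Finset.mem_Icc] at hk hk'
  have hlt : (spform i j a g).length < k := by omega
  simp [rk, dk, pk, mk, segCount_eq_zero i j _ k hk.1 _ hlt]

end Amalgam

/-- `Δ` is a quasi-homomorphism on the amalgamated free product: for a fixed nontrivial
`a ∈ A` with `C a C ≠ C a⁻¹ C`, we have `Δ(gh) ≤ Δ(g) + Δ(h) + 9` for all `g, h`. -/
theorem amalgam_delta_quasimorphism
    (hi : Function.Injective i) (hj : Function.Injective j)
    (a : A) (ha : a ≠ 1)
    (hcoset : DCoset i j (ofA i j a) ≠ DCoset i j ((ofA i j a)⁻¹))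
    (g h : Amalg i j) :
    Delta i j a (g * h) ≤ Delta i j a g + Delta i j a h + 9 := by
  obtain ⟨hAB, hK⟩ := normal_form i j hi hj
  have hCA := HC_le_HA i j
  have hCB := HC_le_HB i j
  have hne : dc (HC i j) (ofA i j a) ≠ dc (HC i j) (ofA i j a)⁻¹ := hcoset
  have haC : ofA i j a ∉ HC i j := by
    intro hC
    refine hne (mem_dc_iff.1 ⟨ofA i j a, hC, ofA i j a, hC, by group⟩)
  have hsp := isSpecialForm_spform i j hAB a haC hne
  set v := ofA i j a
  obtain ⟨L₁, hL₁, ⟨u₁, hu₁, u₁', hu₁', hg⟩, hs₁⟩ := (hsp g).exists_alternating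
  obtain ⟨L₂, hL₂, ⟨u₂, hu₂, u₂', hu₂', hh⟩, hs₂⟩ := (hsp h).exists_alternating
  obtain ⟨L₃, hL₃, ⟨u₃, hu₃, u₃', hu₃', hgh⟩, hs₃⟩ := (hsp (g * h)).exists_alternating
  obtain ⟨P, X, Q, Q', Y, S, Z, L, hr, hs, hZ, hX, hY, hQ, hL, hLa, w, hw, w', hw', hp⟩ :=
    tripod hCA hCB hAB L₁.reverse L₂ (u₁' * u₂) (mul_mem hu₁' hu₂) hL₁.reverse hL₂
  rw [List.reverse_reverse] at hp
  have hL₁' : L₁ = P.reverse ++ X.reverse ++ Q.reverse := by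
    rw [← List.reverse_reverse L₁, hr]; simp
  have hL₃L : L₃.map (dc (HC i j)) = (P.reverse ++ Z ++ S).map (dc (HC i j)) := by
    rw [← hL]
    refine map_dc_eq hCA hCB hAB hK hL₃ hLa (c := w⁻¹ * u₁⁻¹ * u₃) (c' := u₃' * u₂'⁻¹ * w'⁻¹)
      (mul_mem (mul_mem (inv_mem hw) (inv_mem hu₁)) hu₃)
      (mul_mem (mul_mem hu₃' (inv_mem hu₂')) (inv_mem hw')) ?_
    have e1 : L.prod = w⁻¹ * (L₁.prod * (u₁' * u₂) * L₂.prod) * w'⁻¹ := by rw [hp]; group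
    have e2 : L₁.prod * (u₁' * u₂) * L₂.prod = u₁⁻¹ * (g * h) * u₂'⁻¹ := by
      rw [← hg, ← hh]; group
    rw [e1, e2, ← hgh]; group
  have hdisj : ∀ x, decide (dc (HC i j) x = dc (HC i j) v) = true →
      decide (dc (HC i j) x = dc (HC i j) v⁻¹) = true → False := by
    intro x h1 h2
    rw [decide_eq_true_eq] at h1 h2
    exact hne (h1.symm.trans h2)
  -- Each of the three special forms is a pair of legs of the tripod with centre of length ≤ 1.
  obtain ⟨E₁, hE₁, h₁⟩ := gaps_pair _ _ hdisj P.reverse X.reverse Q.reverse (by simp; omega)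
  obtain ⟨E₂, hE₂, h₂⟩ := gaps_pair _ _ hdisj Q' Y S (by omega)
  obtain ⟨E₃, hE₃, h₃⟩ := gaps_pair _ _ hdisj P.reverse Z S hZ
  have hmapdc : ∀ (y : Amalg i j) (l : List (Amalg i j)), ind i j y l =
      (l.map (dc (HC i j))).map (fun T => decide (T = dc (HC i j) y)) := by
    intro y l
    simp [ind, Function.comp_def]
  change gaps (ind i j v _) + gaps (ind i j v⁻¹ _) =
    (gaps (ind i j v _) + gaps (ind i j v⁻¹ _)) + (gaps (ind i j v _) + gaps (ind i j v⁻¹ _)) + _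
    at h₁ h₂ h₃
  rw [← hL₁'] at h₁
  rw [← hs] at h₂
  rw [hmapdc v (P.reverse ++ Z ++ S), hmapdc v⁻¹ (P.reverse ++ Z ++ S), ← hL₃L, ← hmapdc,
    ← hmapdc] at h₃
  -- Inversion exchanges the two indicator sequences of the cancelled leg.
  have hQ1 : ind i j v Q' = ind i j v⁻¹ Q := by
    rw [hmapdc, hQ, List.map_map]
    simp [ind, Function.comp_def, dc_inv_eq_iff]
  have hQ2 : ind i j v⁻¹ Q' = ind i j v Q := by
    rw [hmapdc, hQ, List.map_map]
    simp [ind, Function.comp_def, dc_inv_eq_iff]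
  have hrev : ∀ y, gaps (ind i j y Q.reverse) = gaps (ind i j y Q) := by
    intro y
    rw [ind, List.map_reverse, gaps_reverse, ind]
  rw [hQ1, hQ2] at h₂
  rw [hrev, hrev] at h₁
  have hpt : ∀ k, rk i j a k (g * h) ≤ rk i j a k g + rk i j a k h +
      ((E₁.count (2 * k - 1) + E₂.count (2 * k - 1) + E₃.count (2 * k - 1) : ℕ) : ℤ) := by
    intro k
    have c₁ := congrArg (Multiset.count (2 * k - 1)) h₁
    have c₂ := congrArg (Multiset.count (2 * k - 1)) h₂
    have c₃ := congrArg (Multiset.count (2 * k - 1)) h₃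
    simp only [Multiset.count_add] at c₁ c₂ c₃
    rw [← (hs₁ k).1, ← (hs₁ k).2] at c₁
    rw [← (hs₂ k).1, ← (hs₂ k).2] at c₂
    rw [← (hs₃ k).1, ← (hs₃ k).2] at c₃
    simp only [rk, dk, pk, mk]
    omega
  set N := max (spform i j a g).length (max (spform i j a h).length (spform i j a (g * h)).length)
    with hN
  rw [Delta_eq_sum i j a g N (by omega), Delta_eq_sum i j a h N (by omega),
    Delta_eq_sum i j a (g * h) N (by omega)]
  have hsum := Finset.sum_le_sum fun k (_ : k ∈ Finset.Icc 1 N) => hpt k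
  rw [Finset.sum_add_distrib, Finset.sum_add_distrib, ← Nat.cast_sum, Finset.sum_add_distrib,
    Finset.sum_add_distrib] at hsum
  have b₁ := sum_count_odd_le_card E₁ N
  have b₂ := sum_count_odd_le_card E₂ N
  have b₃ := sum_count_odd_le_card E₃ N
  have : (∑ k ∈ Finset.Icc 1 N, rk i j a k (g * h)) ≤
      (∑ k ∈ Finset.Icc 1 N, rk i j a k g) + (∑ k ∈ Finset.Icc 1 N, rk i j a k h) + 9 := by
    omega
  exact_mod_cast this

end PalAmalg
end
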